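/- (Theorem 20) Let 0 < θ, θ₁ < 1, 0 < q₁, r₀, r₁, r ≤ ∞, a, a₁, b₀, b₁ ∈ SV, ‖s^{-1/r₁} b₁(s)/a₁(s)‖_{r₁,(0,1)} < ∞, and ‖s^{-1/r₀} b₀(s)‖_{r₀,(1,∞)} < ∞. Put c₀(t) = ‖s^{-1/r₀} b₀(s)‖_{r₀,(t,∞)}, c₁(t) = a₁(t) ‖s^{-1/r₁} b₁(s)/a₁(s)‖_{r₁,(0,t)}, and ρ(t) = t^{θ₁} c₀(t)/c₁(t). Then (Ā_{0,r₀;b₀}, Ā^𝓡_{θ₁,r₁,b₁,q₁,a₁})_{θ,r;a} ≅ Ā_{η,r;a^#}, where η = θθ₁ and a^#(t) = c₀(t)^{1-θ} c₁(t)^θ a(ρ(t)). -/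

import Mathlib

open MeasureTheory Set ENNReal Filter

noncomputable section

/-- The `L_q` quasi-norm (with respect to Lebesgue measure) of an `ℝ≥0∞`-valued
function over a set of reals; for `q = ∞` it is the essential supremum. -/
def LqNorm (q : ℝ≥0∞) (s : Set ℝ) (g : ℝ → ℝ≥0∞) : ℝ≥0∞ :=
  if q = ∞ then essSup g (volume.restrict s)
  else (∫⁻ t in s, g t ^ q.toReal) ^ q⁻¹.toReal

/-- The weight `s ↦ s ^ (-1/r) * b s`, as an `ℝ≥0∞`-valued function
(`1/∞ = 0` by convention). -/
def svWgt (r : ℝ≥0∞) (b : ℝ → ℝ) : ℝ → ℝ≥0∞ :=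
  fun s => ENNReal.ofReal (s ^ (-(r⁻¹.toReal)) * b s)

/-- `f` and `g` are equivalent on `s`: each is bounded by a constant multiple
of the other there. -/
def EquivOn (s : Set ℝ) (f g : ℝ → ℝ) : Prop :=
  ∃ C : ℝ, 0 < C ∧ ∀ t ∈ s, C⁻¹ * g t ≤ f t ∧ f t ≤ C * g t

/-- A positive measurable function `b` on `(0,∞)` is slowly varying if for every
`ε > 0`, `t ^ ε * b t` is equivalent to a non-decreasing function and
`t ^ (-ε) * b t` is equivalent to a non-increasing function. -/
def SlowlyVarying (b : ℝ → ℝ) : Prop :=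
  AEMeasurable b (volume.restrict (Ioi 0)) ∧ (∀ t ∈ Ioi (0:ℝ), 0 < b t) ∧
    ∀ ε : ℝ, 0 < ε →
      (∃ g : ℝ → ℝ, MonotoneOn g (Ioi 0) ∧ EquivOn (Ioi 0) (fun t => t ^ ε * b t) g) ∧
      (∃ g : ℝ → ℝ, AntitoneOn g (Ioi 0) ∧ EquivOn (Ioi 0) (fun t => t ^ (-ε) * b t) g)

/-- A quasi-Banach space continuously embedded into the ambient (Hausdorff) space `E`,
recorded via its extended-real-valued quasi-norm; the space itself is the set of
vectors of finite quasi-norm. -/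
structure QuasiBanach (E : Type*) [AddCommGroup E] [Module ℝ E] where
  N : E → ℝ≥0∞
  zero : N 0 = 0
  definite : ∀ x, N x = 0 → x = 0
  smul : ∀ (c : ℝ) (x : E), N (c • x) = ENNReal.ofReal |c| * N x
  quasi : ∃ C : ℝ≥0∞, 1 ≤ C ∧ C ≠ ∞ ∧ ∀ x y, N (x + y) ≤ C * (N x + N y)
  complete : ∀ f : ℕ → E,
    (∀ ε : ℝ≥0∞, 0 < ε → ∃ M : ℕ, ∀ m ≥ M, ∀ n ≥ M, N (f m - f n) < ε) →
    (∀ n, N (f n) ≠ ∞) →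
    ∃ g : E, N g ≠ ∞ ∧ Tendsto (fun n => N (f n - g)) atTop (nhds 0)

variable {E : Type*} [AddCommGroup E] [Module ℝ E]

/-- The Peetre K-functional of the couple whose quasi-norms are `N₀`, `N₁`. -/
def Kf (N₀ N₁ : E → ℝ≥0∞) (t : ℝ) (f : E) : ℝ≥0∞ :=
  ⨅ g : E, N₀ g + ENNReal.ofReal t * N₁ (f - g)

/-- The quasi-norm of the real interpolation space `Ā_{θ,q;b}`. -/
def normK (N₀ N₁ : E → ℝ≥0∞) (θ : ℝ) (q : ℝ≥0∞) (b : ℝ → ℝ) (f : E) : ℝ≥0∞ :=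
  LqNorm q (Ioi 0) fun u =>
    ENNReal.ofReal (u ^ (-θ - q⁻¹.toReal) * b u) * Kf N₀ N₁ u f

/-- The quasi-norm of the limiting interpolation space `Ā^𝓛_{σ,r,b,q,a}`. -/
def normL (N₀ N₁ : E → ℝ≥0∞) (σ : ℝ) (r q : ℝ≥0∞) (b a : ℝ → ℝ) (f : E) : ℝ≥0∞ :=
  LqNorm r (Ioi 0) fun t =>
    ENNReal.ofReal (t ^ (-(r⁻¹.toReal)) * (b t / a t)) *
      LqNorm q (Ioo 0 t) fun u =>
        ENNReal.ofReal (u ^ (-σ - q⁻¹.toReal) * a u) * Kf N₀ N₁ u f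

/-- The quasi-norm of the limiting interpolation space `Ā^𝓡_{σ,r,b,q,a}`. -/
def normR (N₀ N₁ : E → ℝ≥0∞) (σ : ℝ) (r q : ℝ≥0∞) (b a : ℝ → ℝ) (f : E) : ℝ≥0∞ :=
  LqNorm r (Ioi 0) fun t =>
    ENNReal.ofReal (t ^ (-(r⁻¹.toReal)) * (b t / a t)) *
      LqNorm q (Ioi t) fun u =>
        ENNReal.ofReal (u ^ (-σ - q⁻¹.toReal) * a u) * Kf N₀ N₁ u f

/-- Two (extended-real-valued) quasi-norms define the same space with
equivalent quasi-norms. -/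
def EquivNorms (nX nY : E → ℝ≥0∞) : Prop :=
  ∃ C : ℝ≥0∞, 0 < C ∧ C ≠ ∞ ∧ ∀ f : E, C⁻¹ * nY f ≤ nX f ∧ nX f ≤ C * nY f

def PW (f : ℝ → ℝ) (α β : ℝ) : Prop :=
  (∀ t, 0 < t → 0 < f t) ∧ ∃ C : ℝ, 0 < C ∧ ∀ s t, 0 < s → s ≤ t →
    f t ≤ C * (t / s) ^ β * f s ∧ (t / s) ^ α * f s ≤ C * f t

def SVp (f : ℝ → ℝ) : Prop := ∀ ε : ℝ, 0 < ε → PW f (-ε) ε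

lemma PW.pos {f : ℝ → ℝ} {α β : ℝ} (h : PW f α β) {t : ℝ} (ht : 0 < t) : 0 < f t := h.1 t ht

lemma SVp.pos {f : ℝ → ℝ} (h : SVp f) {t : ℝ} (ht : 0 < t) : 0 < f t := (h 1 one_pos).1 t ht

lemma one_le_div_aux {s t : ℝ} (hs : 0 < s) (hst : s ≤ t) : 1 ≤ t / s := by
  rw [le_div_iff₀ hs]; linarith

lemma PW.mono {f : ℝ → ℝ} {α β α' β' : ℝ} (h : PW f α β) (h1 : α' ≤ α) (h2 : β ≤ β') :
    PW f α' β' := by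
  obtain ⟨hp, C, hC, h⟩ := h
  refine ⟨hp, C, hC, fun s t hs hst => ?_⟩
  have h3 := one_le_div_aux hs hst
  have := hp s hs
  obtain ⟨h4, h5⟩ := h s t hs hst
  constructor
  · refine h4.trans ?_
    gcongr
  · refine le_trans ?_ h5
    gcongr

lemma PW.mul {f g : ℝ → ℝ} {α β α' β' : ℝ} (h : PW f α β) (h' : PW g α' β') :
    PW (fun t => f t * g t) (α + α') (β + β') := by
  obtain ⟨hp, C, hC, h⟩ := h
  obtain ⟨hp', C', hC', h'⟩ := h'
  refine ⟨fun t ht => mul_pos (hp t ht) (hp' t ht), C * C', by positivity, fun s t hs hst => ?_⟩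
  have ht : 0 < t := by linarith
  have h3 : 0 < t / s := by positivity
  have := hp s hs
  have := hp' s hs
  have := hp t ht
  have := hp' t ht
  obtain ⟨h4, h5⟩ := h s t hs hst
  obtain ⟨h4', h5'⟩ := h' s t hs hst
  rw [Real.rpow_add h3, Real.rpow_add h3]
  constructor
  · calc f t * g t ≤ (C * (t / s) ^ β * f s) * (C' * (t / s) ^ β' * g s) := by gcongr
      _ = _ := by ring
  · calc _ = ((t / s) ^ α * f s) * ((t / s) ^ α' * g s) := by ring
      _ ≤ (C * f t) * (C' * g t) := by gcongr
      _ = _ := by ring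

lemma PW.inv {f : ℝ → ℝ} {α β : ℝ} (h : PW f α β) :
    PW (fun t => (f t)⁻¹) (-β) (-α) := by
  obtain ⟨hp, C, hC, h⟩ := h
  refine ⟨fun t ht => inv_pos.2 (hp t ht), C, by positivity, fun s t hs hst => ?_⟩
  have ht : 0 < t := by linarith
  have h3 : 0 < t / s := by positivity
  have := hp s hs
  have := hp t ht
  obtain ⟨h4, h5⟩ := h s t hs hst
  rw [Real.rpow_neg h3.le, Real.rpow_neg h3.le]
  have e1 : 0 < (t / s) ^ α := by positivity
  have e2 : 0 < (t / s) ^ β := by positivity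
  constructor
  · rw [show C * ((t / s) ^ α)⁻¹ * (f s)⁻¹ = C / ((t / s) ^ α * f s) by field_simp]
    rw [le_div_iff₀ (by positivity), inv_mul_le_iff₀ (by positivity)]
    linarith
  · rw [← mul_inv, inv_le_iff_one_le_mul₀ (by positivity)]
    rw [show C * (f t)⁻¹ * ((t / s) ^ β * f s) = (C * (t / s) ^ β * f s) / f t by field_simp]
    rw [le_div_iff₀ (by positivity)]
    linarith

lemma PW.rpow {f : ℝ → ℝ} {α β θ : ℝ} (h : PW f α β) (hθ : 0 ≤ θ) :
    PW (fun t => (f t) ^ θ) (α * θ) (β * θ) := by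
  obtain ⟨hp, C, hC, h⟩ := h
  refine ⟨fun t ht => Real.rpow_pos_of_pos (hp t ht) _, C ^ θ, by positivity,
    fun s t hs hst => ?_⟩
  have ht : 0 < t := by linarith
  have h3 : 0 < t / s := by positivity
  have := hp s hs
  have := hp t ht
  obtain ⟨h4, h5⟩ := h s t hs hst
  rw [Real.rpow_mul h3.le, Real.rpow_mul h3.le]
  have e1 : 0 < (t / s) ^ α := by positivity
  have e2 : 0 < (t / s) ^ β := by positivity
  rw [← Real.mul_rpow (by positivity) (by positivity), ← Real.mul_rpow (by positivity) (by positivity),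
    ← Real.mul_rpow (by positivity) (by positivity), ← Real.mul_rpow (by positivity) (by positivity)]
  exact ⟨Real.rpow_le_rpow (by positivity) h4 hθ, Real.rpow_le_rpow (by positivity) h5 hθ⟩

lemma PW.id_rpow (p : ℝ) : PW (fun t => t ^ p) p p := by
  refine ⟨fun t ht => Real.rpow_pos_of_pos ht _, 1, one_pos, fun s t hs hst => ?_⟩
  have ht : 0 < t := by linarith
  have e2 : 0 < s ^ p := by positivity
  rw [Real.div_rpow ht.le hs.le]
  constructor
  · apply le_of_eq; field_simp
  · apply le_of_eq; field_simp

lemma PW.congr {f g : ℝ → ℝ} {α β : ℝ} (h : PW f α β) (hfg : ∀ t, 0 < t → g t = f t) :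
    PW g α β := by
  obtain ⟨hp, C, hC, h⟩ := h
  refine ⟨fun t ht => by rw [hfg t ht]; exact hp t ht, C, hC, fun s t hs hst => ?_⟩
  rw [hfg s hs, hfg t (by linarith)]
  exact h s t hs hst

lemma PW.sym {f : ℝ → ℝ} {ε : ℝ} (h : PW f (-ε) ε) (hε : 0 < ε) :
    ∃ C : ℝ, 0 < C ∧ ∀ x y L, 0 < x → 0 < y → y / x ≤ L → x / y ≤ L → f y ≤ C * L ^ ε * f x := by
  obtain ⟨hp, C, hC, h⟩ := h
  refine ⟨C, hC, fun x y L hx hy h1 h2 => ?_⟩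
  have := hp x hx
  have := hp y hy
  have hL : 0 < L := lt_of_lt_of_le (by positivity) h1
  rcases le_total x y with hxy | hxy
  · refine (h x y hx hxy).1.trans ?_
    gcongr
  · have h3 := (h y x hy hxy).2
    have h4 : 0 < x / y := by positivity
    rw [Real.rpow_neg h4.le, inv_mul_le_iff₀ (by positivity)] at h3
    calc f y ≤ (x / y) ^ ε * (C * f x) := h3
      _ ≤ L ^ ε * (C * f x) := by gcongr
      _ = _ := by ring

lemma PW.comp {a ρ : ℝ → ℝ} {ε α β : ℝ} (ha : PW a (-ε) ε) (hε : 0 < ε) (hρ : PW ρ α β)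
    (hα : 0 ≤ α) (hβ : 0 ≤ β) : PW (fun t => a (ρ t)) (-(β * ε)) (β * ε) := by
  obtain ⟨C, hC, h⟩ := ha.sym hε
  obtain ⟨hp, C', hC', h'⟩ := hρ
  refine ⟨fun t ht => ha.1 _ (hp t ht), C * C' ^ ε, by positivity, fun s t hs hst => ?_⟩
  have ht : 0 < t := by linarith
  have h3 : 0 < t / s := by positivity
  have h31 := one_le_div_aux hs hst
  have p1 := hp s hs
  have p2 := hp t ht
  have e1 : 0 < (t / s) ^ (β * ε) := by positivity
  obtain ⟨h4, h5⟩ := h' s t hs hst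
  have k1 : ρ t / ρ s ≤ C' * (t / s) ^ β := by rw [div_le_iff₀ p1]; exact h4
  have k2 : ρ s / ρ t ≤ C' * (t / s) ^ β := by
    rw [div_le_iff₀ p2]
    have : 1 ≤ (t / s) ^ α := Real.one_le_rpow h31 hα
    have : 1 ≤ (t / s) ^ β := Real.one_le_rpow h31 hβ
    have : 0 < C' * ρ t := by positivity
    nlinarith
  have g1 := h _ _ _ p1 p2 k1 k2
  have g2 := h _ _ _ p2 p1 k2 k1
  rw [Real.mul_rpow hC'.le (by positivity), ← Real.rpow_mul h3.le] at g1 g2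
  constructor
  · linarith
  · rw [Real.rpow_neg h3.le, inv_mul_le_iff₀ e1]
    linarith

lemma SlowlyVarying.svp {b : ℝ → ℝ} (h : SlowlyVarying b) : SVp b := by
  intro ε hε
  obtain ⟨_, hp, h⟩ := h
  obtain ⟨⟨g, hg, C, hC, h1⟩, ⟨g', hg', C', hC', h2⟩⟩ := h ε hε
  refine ⟨hp, C * C + C' * C', by positivity, fun s t hs hst => ?_⟩
  have ht : 0 < t := by linarith
  have h3 : 0 < t / s := by positivity
  have q1 := hp s hs
  have q2 := hp t ht
  have a1 := (h1 s hs).2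
  have a2 := (h1 t ht).1
  have a3 := hg hs ht hst
  have b1 := (h2 s hs).1
  have b2 := (h2 t ht).2
  have b3 := hg' hs ht hst
  simp only [inv_mul_le_iff₀ hC, inv_mul_le_iff₀ hC', Real.rpow_neg hs.le, Real.rpow_neg ht.le] at a2 b1 a1 b2
  have e1 : 0 < s ^ ε := by positivity
  have e2 : 0 < t ^ ε := by positivity
  have u1 : s ^ ε * b s ≤ C * C * (t ^ ε * b t) := by nlinarith
  have u2 : (t ^ ε)⁻¹ * b t ≤ C' * C' * ((s ^ ε)⁻¹ * b s) := by nlinarith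
  rw [Real.rpow_neg h3.le, Real.div_rpow ht.le hs.le]
  constructor
  · rw [inv_mul_le_iff₀ e2] at u2
    refine u2.trans ?_
    rw [show (C * C + C' * C') * (t ^ ε / s ^ ε) * b s = t ^ ε * ((C * C + C' * C') * ((s ^ ε)⁻¹ * b s)) by
      field_simp]
    gcongr
    nlinarith
  · rw [inv_mul_le_iff₀ (by positivity),
      show t ^ ε / s ^ ε * ((C * C + C' * C') * b t) = ((C * C + C' * C') * (t ^ ε * b t)) / s ^ ε by field_simp,
      le_div_iff₀ e1]
    have : 0 < t ^ ε * b t := by positivity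
    nlinarith [mul_pos (mul_pos hC' hC') this]

lemma SVp.mul {f g : ℝ → ℝ} (hf : SVp f) (hg : SVp g) : SVp (fun t => f t * g t) := by
  intro ε hε
  exact ((hf (ε/2) (by positivity)).mul (hg (ε/2) (by positivity))).mono (by linarith) (by linarith)

lemma SVp.inv {f : ℝ → ℝ} (hf : SVp f) : SVp (fun t => (f t)⁻¹) := by
  intro ε hε
  exact ((hf ε hε).inv).mono (by linarith) (by linarith)

lemma SVp.div {f g : ℝ → ℝ} (hf : SVp f) (hg : SVp g) : SVp (fun t => f t / g t) := by
  simpa only [div_eq_mul_inv] using hf.mul hg.inv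

lemma SVp.rpow {f : ℝ → ℝ} (hf : SVp f) {θ : ℝ} (hθ : 0 < θ) : SVp (fun t => f t ^ θ) := by
  intro ε hε
  exact ((hf (ε/θ) (by positivity)).rpow hθ.le).mono (by apply le_of_eq; field_simp)
    (by apply le_of_eq; field_simp)

lemma SVp.comp {a ρ : ℝ → ℝ} {α β : ℝ} (ha : SVp a) (hρ : PW ρ α β)
    (hα : 0 ≤ α) (hβ : 0 < β) : SVp (fun t => a (ρ t)) := by
  intro ε hε
  exact (PW.comp (ha (ε / β) (by positivity)) (by positivity) hρ hα hβ.le).mono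
    (by apply le_of_eq; field_simp) (by apply le_of_eq; field_simp)

lemma SVp.congr {f g : ℝ → ℝ} (h : SVp f) (hfg : ∀ t, 0 < t → g t = f t) : SVp g :=
  fun ε hε => (h ε hε).congr hfg

lemma SVp.pw {f : ℝ → ℝ} (hf : SVp f) (p : ℝ) {α β : ℝ} (h1 : α < p) (h2 : p < β) :
    PW (fun t => t ^ p * f t) α β := by
  have hε : 0 < min (p - α) (β - p) := by rw [lt_min_iff]; constructor <;> linarith
  refine ((PW.id_rpow p).mul (hf _ hε)).mono ?_ ?_
  · linarith [min_le_left (p - α) (β - p)]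
  · linarith [min_le_right (p - α) (β - p)]


def HN (r : ℝ≥0∞) (S : Set ℝ) (F : ℝ → ℝ≥0∞) : ℝ≥0∞ :=
  LqNorm r S (fun u => ENNReal.ofReal (u ^ (-(r⁻¹.toReal))) * F u)

lemma LqNorm_mono {q : ℝ≥0∞} {S : Set ℝ} (hS : MeasurableSet S) {f g : ℝ → ℝ≥0∞}
    (h : ∀ u ∈ S, f u ≤ g u) : LqNorm q S f ≤ LqNorm q S g := by
  unfold LqNorm
  split_ifs
  · exact essSup_mono_ae ((ae_restrict_iff' hS).2 (Eventually.of_forall h))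
  · refine ENNReal.rpow_le_rpow ?_ ENNReal.toReal_nonneg
    exact setLIntegral_mono' hS fun u hu => ENNReal.rpow_le_rpow (h u hu) ENNReal.toReal_nonneg

lemma LqNorm_congr {q : ℝ≥0∞} {S : Set ℝ} (hS : MeasurableSet S) {f g : ℝ → ℝ≥0∞}
    (h : ∀ u ∈ S, f u = g u) : LqNorm q S f = LqNorm q S g :=
  le_antisymm (LqNorm_mono hS fun u hu => (h u hu).le) (LqNorm_mono hS fun u hu => (h u hu).ge)

lemma LqNorm_mono_set {q : ℝ≥0∞} {S T : Set ℝ} (h : S ⊆ T) (f : ℝ → ℝ≥0∞) :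
    LqNorm q S f ≤ LqNorm q T f := by
  unfold LqNorm
  split_ifs
  · exact essSup_mono_measure (Measure.restrict_mono h le_rfl).absolutelyContinuous
  · exact ENNReal.rpow_le_rpow (lintegral_mono_set h) ENNReal.toReal_nonneg

lemma HN_mono {q : ℝ≥0∞} {S : Set ℝ} (hS : MeasurableSet S) {f g : ℝ → ℝ≥0∞}
    (h : ∀ u ∈ S, f u ≤ g u) : HN q S f ≤ HN q S g :=
  LqNorm_mono hS fun u hu => by gcongr; exact h u hu

lemma HN_congr {q : ℝ≥0∞} {S : Set ℝ} (hS : MeasurableSet S) {f g : ℝ → ℝ≥0∞}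
    (h : ∀ u ∈ S, f u = g u) : HN q S f = HN q S g :=
  le_antisymm (HN_mono hS fun u hu => (h u hu).le) (HN_mono hS fun u hu => (h u hu).ge)

lemma HN_mono_set {q : ℝ≥0∞} {S T : Set ℝ} (h : S ⊆ T) (f : ℝ → ℝ≥0∞) :
    HN q S f ≤ HN q T f := LqNorm_mono_set h _

lemma qpos {q : ℝ≥0∞} (hq : 0 < q) (h : q ≠ ∞) : 0 < q.toReal := ENNReal.toReal_pos hq.ne' h

lemma HN_const_mul_ge {q : ℝ≥0∞} (hq : 0 < q) (S : Set ℝ) (c : ℝ≥0∞) (f : ℝ → ℝ≥0∞) :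
    c * HN q S f ≤ HN q S (fun u => c * f u) := by
  unfold HN LqNorm
  simp_rw [mul_left_comm _ c]
  split_ifs with h
  · rw [ENNReal.essSup_const_mul]
  · have hp := qpos hq h
    simp_rw [ENNReal.mul_rpow_of_nonneg c _ hp.le]
    refine le_trans ?_ (ENNReal.rpow_le_rpow (lintegral_const_mul_le _ _) ENNReal.toReal_nonneg)
    rw [ENNReal.mul_rpow_of_nonneg _ _ ENNReal.toReal_nonneg, ← ENNReal.rpow_mul, ENNReal.toReal_inv,
      mul_inv_cancel₀ hp.ne', ENNReal.rpow_one]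

lemma HN_const_mul {q : ℝ≥0∞} (hq : 0 < q) (S : Set ℝ) {c : ℝ≥0∞} (hc : c ≠ ∞) (f : ℝ → ℝ≥0∞) :
    HN q S (fun u => c * f u) = c * HN q S f := by
  refine le_antisymm ?_ (HN_const_mul_ge hq S c f)
  unfold HN LqNorm
  simp_rw [mul_left_comm _ c]
  split_ifs with h
  · rw [ENNReal.essSup_const_mul]
  · have hp := qpos hq h
    simp_rw [ENNReal.mul_rpow_of_nonneg c _ hp.le]
    rw [lintegral_const_mul' _ _ (ENNReal.rpow_ne_top_of_nonneg hp.le hc),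
     ENNReal.mul_rpow_of_nonneg _ _ ENNReal.toReal_nonneg, ← ENNReal.rpow_mul, ENNReal.toReal_inv,
      mul_inv_cancel₀ hp.ne', ENNReal.rpow_one]

/-- Mean-type inequality. -/
lemma add_rpow_le_aux (p : ℝ) (hp : 0 ≤ p) (x y : ℝ≥0∞) :
    (x + y) ^ p ≤ 2 ^ p * (x ^ p + y ^ p) := by
  have : x + y ≤ 2 * max x y := by
    rw [two_mul]; gcongr <;> simp
  calc (x + y) ^ p ≤ (2 * max x y) ^ p := ENNReal.rpow_le_rpow this hp
    _ = 2 ^ p * (max x y) ^ p := ENNReal.mul_rpow_of_nonneg _ _ hp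
    _ ≤ _ := by
      gcongr
      rcases le_total x y with h | h
      · rw [max_eq_right h]; exact le_add_self
      · rw [max_eq_left h]; exact le_self_add

lemma HN_split {q : ℝ≥0∞} (hq : 0 < q) : ∃ C : ℝ≥0∞, C ≠ ∞ ∧ ∀ (s t : ℝ) (F : ℝ → ℝ≥0∞), s < t →
    HN q (Ioi s) F ≤ C * (HN q (Ioo s t) F + HN q (Ioi t) F) := by
  refine ⟨2 ^ q⁻¹.toReal, ENNReal.rpow_ne_top_of_nonneg ENNReal.toReal_nonneg (by simp), ?_⟩
  intro s t F hst
  unfold HN LqNorm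
  have hU : Ioi s = Ioc s t ∪ Ioi t := (Ioc_union_Ioi_eq_Ioi hst.le).symm
  have hI : (volume.restrict (Ioc s t) : Measure ℝ) = volume.restrict (Ioo s t) :=
    Measure.restrict_congr_set Ioo_ae_eq_Ioc.symm
  split_ifs with h
  · simp only [h, ENNReal.inv_top, ENNReal.toReal_zero, ENNReal.rpow_zero, one_mul]
    refine essSup_le_of_ae_le _ ?_
    rw [hU]
    refine (ae_restrict_union_iff _ _ _).2 ⟨?_, ?_⟩
    · rw [hI]
      filter_upwards [ENNReal.ae_le_essSup (μ := volume.restrict (Ioo s t)) (fun u => ENNReal.ofReal (u ^ (-0:ℝ)) * F u)] with u hu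
      exact hu.trans le_self_add
    · filter_upwards [ENNReal.ae_le_essSup (μ := volume.restrict (Ioi t)) (fun u => ENNReal.ofReal (u ^ (-0:ℝ)) * F u)] with u hu
      exact hu.trans le_add_self
  · refine le_trans (ENNReal.rpow_le_rpow (z := q⁻¹.toReal) ?_ ENNReal.toReal_nonneg) (add_rpow_le_aux _ ENNReal.toReal_nonneg _ _)
    rw [hU]
    refine (lintegral_union_le _ _ _).trans ?_
    rw [hI]

lemma essSup_eq_of_smul_aux {c : ℝ≥0∞} (hc : c ≠ 0) {μ : Measure ℝ} {g : ℝ → ℝ≥0∞} :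
    essSup g (c • μ) = essSup g μ := by
  refine le_antisymm (essSup_mono_measure ?_) (essSup_mono_measure ?_)
  · exact Measure.smul_absolutelyContinuous
  · exact Measure.absolutelyContinuous_smul hc

lemma HN_scale {q : ℝ≥0∞} {l : ℝ} (hl : 0 < l) {S : Set ℝ} (hS : MeasurableSet S)
    (hS0 : ∀ u ∈ S, 0 < u) (hq : 0 < q) (F : ℝ → ℝ≥0∞) :
    HN q S F = HN q ((fun u => l * u) ⁻¹' S) (fun u => F (l * u)) := by
  have hme : MeasurableEmbedding (fun u : ℝ => l * u) := (Homeomorph.mulLeft₀ l hl.ne').measurableEmbedding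
  have hS' : MeasurableSet ((fun u => l * u) ⁻¹' S) := hme.measurable hS
  have hvol : (volume.restrict S : Measure ℝ) =
      ENNReal.ofReal l • Measure.map (fun u => l * u) (volume.restrict ((fun u => l * u) ⁻¹' S)) := by
    rw [← hme.restrict_map, ← Measure.restrict_smul]
    congr 1
    have := Real.smul_map_volume_mul_left hl.ne'
    rw [abs_of_pos hl] at this
    exact this.symm
  have hl' : ENNReal.ofReal l ≠ 0 := by simpa using hl
  unfold HN LqNorm
  rw [hvol]
  split_ifs with h
  · rw [essSup_eq_of_smul_aux hl', hme.essSup_map_measure]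
    simp [h, Function.comp_def]
  · have hp := qpos hq h
    congr 1
    rw [lintegral_smul_measure, hme.lintegral_map, smul_eq_mul,
      ← lintegral_const_mul' _ _ ENNReal.ofReal_ne_top]
    refine setLIntegral_congr_fun hS' fun u hu => ?_
    have hu0 : 0 < u := by
      have := hS0 _ hu
      exact pos_of_mul_pos_right this hl.le
    simp only
    rw [ENNReal.mul_rpow_of_nonneg _ _ hp.le, ENNReal.mul_rpow_of_nonneg _ _ hp.le, ← mul_assoc]
    congr 1
    rw [ENNReal.ofReal_rpow_of_pos (by positivity), ENNReal.ofReal_rpow_of_pos (by positivity),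
      ← ENNReal.ofReal_mul hl.le, ← Real.rpow_mul (by positivity), ← Real.rpow_mul (by positivity),
      ENNReal.toReal_inv, neg_mul, inv_mul_cancel₀ hp.ne', Real.rpow_neg_one, Real.rpow_neg_one]
    congr 1
    field_simp

lemma HN_scale_Ioi {q : ℝ≥0∞} {l : ℝ} (hl : 0 < l) (hq : 0 < q) (F : ℝ → ℝ≥0∞) {t : ℝ}
    (ht : 0 ≤ t) : HN q (Ioi (l * t)) F = HN q (Ioi t) (fun u => F (l * u)) := by
  rw [HN_scale hl measurableSet_Ioi (fun u hu => lt_of_le_of_lt (by positivity) hu) hq]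
  congr 1
  ext u; simp [hl, hl.ne']

lemma HN_scale_Ioo {q : ℝ≥0∞} {l : ℝ} (hl : 0 < l) (hq : 0 < q) (F : ℝ → ℝ≥0∞) {s t : ℝ}
    (ht : 0 ≤ s) : HN q (Ioo (l * s) (l * t)) F = HN q (Ioo s t) (fun u => F (l * u)) := by
  rw [HN_scale hl measurableSet_Ioo (fun u hu => lt_of_le_of_lt (by positivity) hu.1) hq]
  congr 1
  ext u; simp [hl, hl.ne']

lemma HN_pow_tail {q : ℝ≥0∞} (hq : 0 < q) {β : ℝ} (hβ : β < 0) :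
    HN q (Ioi 1) (fun u => ENNReal.ofReal (u ^ β)) ≠ ∞ := by
  unfold HN LqNorm
  split_ifs with h
  · refine ne_top_of_le_ne_top ENNReal.one_ne_top (essSup_le_of_ae_le _ ?_)
    refine (ae_restrict_iff' measurableSet_Ioi).2 (Eventually.of_forall fun u hu => ?_)
    simp only [h, ENNReal.inv_top, ENNReal.toReal_zero, neg_zero, Real.rpow_zero, ENNReal.ofReal_one, one_mul]
    rw [ENNReal.ofReal_le_one]
    exact Real.rpow_le_one_of_one_le_of_nonpos (le_of_lt hu) hβ.le
  · have hp := qpos hq h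
    refine ENNReal.rpow_ne_top_of_nonneg ENNReal.toReal_nonneg ?_
    have : ∀ u ∈ Ioi (1:ℝ), (ENNReal.ofReal (u ^ (-q⁻¹.toReal)) * ENNReal.ofReal (u ^ β)) ^ q.toReal
        = ENNReal.ofReal (u ^ (-1 + β * q.toReal)) := by
      intro u hu
      have hu : 0 < u := lt_trans one_pos hu
      rw [← ENNReal.ofReal_mul (by positivity), ← Real.rpow_add hu,
        ENNReal.ofReal_rpow_of_pos (by positivity), ← Real.rpow_mul hu.le, ENNReal.toReal_inv,
        add_mul, neg_mul, inv_mul_cancel₀ hp.ne']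
    rw [setLIntegral_congr_fun measurableSet_Ioi this]
    have hi : IntegrableOn (fun u : ℝ => u ^ (-1 + β * q.toReal)) (Ioi 1) :=
      integrableOn_Ioi_rpow_of_lt (by nlinarith) one_pos
    exact (Integrable.lintegral_lt_top hi).ne

lemma HN_pow_head {q : ℝ≥0∞} (hq : 0 < q) {β : ℝ} (hβ : 0 < β) :
    HN q (Ioo 0 1) (fun u => ENNReal.ofReal (u ^ β)) ≠ ∞ := by
  unfold HN LqNorm
  split_ifs with h
  · refine ne_top_of_le_ne_top ENNReal.one_ne_top (essSup_le_of_ae_le _ ?_)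
    refine (ae_restrict_iff' measurableSet_Ioo).2 (Eventually.of_forall fun u hu => ?_)
    simp only [h, ENNReal.inv_top, ENNReal.toReal_zero, neg_zero, Real.rpow_zero, ENNReal.ofReal_one, one_mul]
    rw [ENNReal.ofReal_le_one]
    exact Real.rpow_le_one hu.1.le hu.2.le hβ.le
  · have hp := qpos hq h
    refine ENNReal.rpow_ne_top_of_nonneg ENNReal.toReal_nonneg ?_
    have : ∀ u ∈ Ioo (0:ℝ) 1, (ENNReal.ofReal (u ^ (-q⁻¹.toReal)) * ENNReal.ofReal (u ^ β)) ^ q.toReal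
        = ENNReal.ofReal (u ^ (-1 + β * q.toReal)) := by
      intro u hu
      have hu : 0 < u := hu.1
      rw [← ENNReal.ofReal_mul (by positivity), ← Real.rpow_add hu,
        ENNReal.ofReal_rpow_of_pos (by positivity), ← Real.rpow_mul hu.le, ENNReal.toReal_inv,
        add_mul, neg_mul, inv_mul_cancel₀ hp.ne']
    rw [setLIntegral_congr_fun measurableSet_Ioo this]
    have hi : IntegrableOn (fun u : ℝ => u ^ (-1 + β * q.toReal)) (Ioo 0 1) :=
      (intervalIntegral.integrableOn_Ioo_rpow_iff one_pos).2 (by nlinarith)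
    exact (Integrable.lintegral_lt_top hi).ne

lemma HN_one_pos {q : ℝ≥0∞} (hq : 0 < q) :
    HN q (Ioo 1 2) (fun _ => 1) ≠ 0 := by
  unfold HN LqNorm
  split_ifs with h
  · simp only [h, ENNReal.inv_top, ENNReal.toReal_zero, neg_zero, Real.rpow_zero, ENNReal.ofReal_one, one_mul]
    rw [essSup_const]
    · simp
    · intro h0
      have := congrArg (fun m => m univ) h0
      simp at this
  · have hp := qpos hq h
    intro h0
    have h1 := (ENNReal.rpow_eq_zero_iff_of_pos (by rw [ENNReal.toReal_inv]; positivity)).1 h0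
    have h2 : (∫⁻ u in Ioo (1:ℝ) 2, ENNReal.ofReal (1/2)) ≤ 0 := by
      rw [← h1]
      refine setLIntegral_mono' measurableSet_Ioo fun u hu => ?_
      have hu0 : 0 < u := lt_trans one_pos hu.1
      simp only
      rw [mul_one, ENNReal.ofReal_rpow_of_pos (by positivity), ← Real.rpow_mul hu0.le, ENNReal.toReal_inv,
        neg_mul, inv_mul_cancel₀ hp.ne', Real.rpow_neg_one]
      apply ENNReal.ofReal_le_ofReal
      rw [one_div]
      exact inv_anti₀ hu0 hu.2.le
    simp at h2


lemma HN_tail {V : ℝ → ℝ} {α β : ℝ} (hV : PW V α β) (hβ : β < 0) {q : ℝ≥0∞} (hq : 0 < q) :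
    ∃ C : ℝ≥0∞, C ≠ ∞ ∧ ∀ s, 0 < s →
      HN q (Ioi s) (fun u => ENNReal.ofReal (V u)) ≤ C * ENNReal.ofReal (V s) := by
  obtain ⟨hp, C, hC, h⟩ := hV
  refine ⟨ENNReal.ofReal C * HN q (Ioi 1) (fun u => ENNReal.ofReal (u ^ β)),
    ENNReal.mul_ne_top ENNReal.ofReal_ne_top (HN_pow_tail hq hβ), fun s hs => ?_⟩
  have e := HN_scale_Ioi hs hq (fun u => ENNReal.ofReal (V u)) (t := 1) zero_le_one
  rw [mul_one] at e
  rw [e, mul_right_comm, ← ENNReal.ofReal_mul hC.le, ← HN_const_mul hq _ ENNReal.ofReal_ne_top]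
  refine HN_mono measurableSet_Ioi fun u hu => ?_
  have hu : (1:ℝ) < u := hu
  rw [← ENNReal.ofReal_mul (mul_nonneg hC.le (hp s hs).le)]
  apply ENNReal.ofReal_le_ofReal
  have := (h s (s * u) hs (by nlinarith)).1
  rw [mul_div_cancel_left₀ _ hs.ne'] at this
  linarith

lemma HN_head {V : ℝ → ℝ} {α β : ℝ} (hV : PW V α β) (hα : 0 < α) {q : ℝ≥0∞} (hq : 0 < q) :
    ∃ C : ℝ≥0∞, C ≠ ∞ ∧ ∀ s, 0 < s →
      HN q (Ioo 0 s) (fun u => ENNReal.ofReal (V u)) ≤ C * ENNReal.ofReal (V s) := by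
  obtain ⟨hp, C, hC, h⟩ := hV
  refine ⟨ENNReal.ofReal C * HN q (Ioo 0 1) (fun u => ENNReal.ofReal (u ^ α)),
    ENNReal.mul_ne_top ENNReal.ofReal_ne_top (HN_pow_head hq hα), fun s hs => ?_⟩
  have e := HN_scale_Ioo hs hq (fun u => ENNReal.ofReal (V u)) (s := 0) (t := 1) le_rfl
  rw [mul_one, mul_zero] at e
  rw [e, mul_right_comm, ← ENNReal.ofReal_mul hC.le, ← HN_const_mul hq _ ENNReal.ofReal_ne_top]
  refine HN_mono measurableSet_Ioo fun u hu => ?_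
  have hu0 : 0 < u := hu.1
  rw [← ENNReal.ofReal_mul (mul_nonneg hC.le (hp s hs).le)]
  apply ENNReal.ofReal_le_ofReal
  have := (h (s * u) s (by positivity) (by nlinarith [hu.2])).2
  rw [show s / (s * u) = u⁻¹ by field_simp, Real.inv_rpow hu0.le, inv_mul_le_iff₀ (by positivity)] at this
  linarith

lemma HN_low {V : ℝ → ℝ} {α β : ℝ} (hV : PW V α β) {q : ℝ≥0∞} (hq : 0 < q) :
    ∃ C : ℝ≥0∞, C ≠ ∞ ∧ ∀ s, 0 < s →
      ENNReal.ofReal (V s) ≤ C * HN q (Ioo s (2 * s)) (fun u => ENNReal.ofReal (V u)) := by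
  have hV' := hV.mono (min_le_left α 0) (le_refl β)
  obtain ⟨hp, C, hC, h⟩ := hV'
  set α' := min α 0
  have hα' : α' ≤ 0 := min_le_right _ _
  set I := HN q (Ioo 1 2) (fun _ => 1) with hI
  have hI0 : I ≠ 0 := HN_one_pos hq
  refine ⟨ENNReal.ofReal (C / (2:ℝ) ^ α') * I⁻¹, ENNReal.mul_ne_top ENNReal.ofReal_ne_top
    (by simpa using hI0), fun s hs => ?_⟩
  have e := HN_scale_Ioo hs hq (fun u => ENNReal.ofReal (V u)) (s := 1) (t := 2) zero_le_one
  rw [mul_one, mul_comm s 2] at e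
  rw [e]
  have key : ENNReal.ofReal (V s) * I ≤
      ENNReal.ofReal (C / (2:ℝ) ^ α') * HN q (Ioo 1 2) (fun u => ENNReal.ofReal (V (s * u))) := by
    rw [hI, ← HN_const_mul hq _ ENNReal.ofReal_ne_top, ← HN_const_mul hq _ ENNReal.ofReal_ne_top]
    refine HN_mono measurableSet_Ioo fun u hu => ?_
    rw [mul_one, ← ENNReal.ofReal_mul (by positivity)]
    apply ENNReal.ofReal_le_ofReal
    have := (h s (s * u) hs (by nlinarith [hu.1])).2
    rw [mul_div_cancel_left₀ _ hs.ne'] at this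
    have h2 : (2:ℝ) ^ α' ≤ u ^ α' :=
      Real.rpow_le_rpow_of_nonpos (by linarith [hu.1]) hu.2.le hα'
    rw [div_mul_eq_mul_div, le_div_iff₀ (by positivity)]
    nlinarith [hp s hs]
  by_cases hIt : I = ∞
  · rw [hIt] at key
    have h0 : ENNReal.ofReal (V s) ≠ 0 := by simpa using hp s hs
    rw [ENNReal.mul_top h0, top_le_iff, ENNReal.mul_eq_top] at key
    exfalso
    have hf : I ≠ ∞ := by
      have h1 : I ≤ HN q (Ioi 1) (fun u => 2 * ENNReal.ofReal (u ^ (-1:ℝ))) := by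
        refine (HN_mono measurableSet_Ioo fun u hu => ?_).trans (HN_mono_set Ioo_subset_Ioi_self _)
        have hu0 : 0 < u := by linarith [hu.1]
        rw [show (2:ℝ≥0∞) = ENNReal.ofReal 2 by simp, ← ENNReal.ofReal_mul (by norm_num), ← ENNReal.ofReal_one]
        apply ENNReal.ofReal_le_ofReal
        rw [Real.rpow_neg_one]
        rw [← div_eq_mul_inv, le_div_iff₀ hu0]; linarith [hu.2]
      rw [HN_const_mul hq _ (by simp)] at h1
      exact ne_top_of_le_ne_top (ENNReal.mul_ne_top (by simp) (HN_pow_tail hq (by norm_num))) h1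
    exact hf hIt
  · calc ENNReal.ofReal (V s) = I⁻¹ * (ENNReal.ofReal (V s) * I) := by
          rw [mul_left_comm, ENNReal.inv_mul_cancel hI0 hIt, mul_one]
      _ ≤ I⁻¹ * (ENNReal.ofReal (C / (2:ℝ) ^ α') * HN q (Ioo 1 2) (fun u => ENNReal.ofReal (V (s * u)))) := by gcongr
      _ = _ := by ring

lemma SVp_of_G {G : ℝ → ℝ≥0∞} (h1 : G 1 ≠ ∞) (h0 : ∀ t, 0 < t → G t ≠ 0)
    (h : ∀ ε : ℝ, 0 < ε → ∃ C : ℝ, 0 < C ∧ ∀ s t L, 0 < s → 0 < t → t / s ≤ L → s / t ≤ L →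
      G t ≤ ENNReal.ofReal (C * L ^ ε) * G s) :
    (∀ t, 0 < t → G t ≠ ∞) ∧ SVp (fun t => (G t).toReal) := by
  have hf : ∀ t, 0 < t → G t ≠ ∞ := by
    intro t ht
    obtain ⟨C, hC, h⟩ := h 1 one_pos
    exact ne_top_of_le_ne_top (ENNReal.mul_ne_top ENNReal.ofReal_ne_top h1)
      (h 1 t (max (t / 1) (1 / t)) one_pos ht (le_max_left _ _) (le_max_right _ _))
  refine ⟨hf, fun ε hε => ?_⟩
  refine ⟨fun t ht => ENNReal.toReal_pos (h0 t ht) (hf t ht), ?_⟩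
  obtain ⟨C, hC, h⟩ := h ε hε
  refine ⟨C, hC, fun s t hs hst => ?_⟩
  have ht : 0 < t := by linarith
  have h3 : 0 < t / s := by positivity
  have h31 := one_le_div_aux hs hst
  have h32 : s / t ≤ t / s := by
    refine le_trans ?_ h31
    rw [div_le_one ht]; exact hst
  have hCp : 0 ≤ C * (t / s) ^ ε := by positivity
  constructor
  · have := ENNReal.toReal_mono (ENNReal.mul_ne_top ENNReal.ofReal_ne_top (hf s hs)) (h s t _ hs ht le_rfl h32)
    rwa [ENNReal.toReal_mul, ENNReal.toReal_ofReal hCp] at this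
  · have := ENNReal.toReal_mono (ENNReal.mul_ne_top ENNReal.ofReal_ne_top (hf t ht)) (h t s _ ht hs h32 le_rfl)
    rw [ENNReal.toReal_mul, ENNReal.toReal_ofReal hCp] at this
    rw [Real.rpow_neg h3.le, inv_mul_le_iff₀ (by positivity)]
    linarith

lemma SVp_tail {b : ℝ → ℝ} (hb : SVp b) {r : ℝ≥0∞} (hr : 0 < r)
    (hfin : HN r (Ioi 1) (fun u => ENNReal.ofReal (b u)) ≠ ∞) :
    (∀ t, 0 < t → HN r (Ioi t) (fun u => ENNReal.ofReal (b u)) ≠ ∞) ∧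
    SVp (fun t => (HN r (Ioi t) (fun u => ENNReal.ofReal (b u))).toReal) ∧
    ∃ C : ℝ≥0∞, C ≠ ∞ ∧ ∀ t, 0 < t →
      ENNReal.ofReal (b t) ≤ C * HN r (Ioi t) (fun u => ENNReal.ofReal (b u)) := by
  obtain ⟨C, hC, hlow⟩ := HN_low (hb 1 one_pos) hr
  have hlow' : ∀ t, 0 < t → ENNReal.ofReal (b t) ≤ C * HN r (Ioi t) (fun u => ENNReal.ofReal (b u)) := by
    intro t ht
    refine (hlow t ht).trans ?_
    gcongr
    exact HN_mono_set Ioo_subset_Ioi_self _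
  have h0 : ∀ t, 0 < t → HN r (Ioi t) (fun u => ENNReal.ofReal (b u)) ≠ 0 := by
    intro t ht h
    have := hlow' t ht
    rw [h, mul_zero, nonpos_iff_eq_zero, ENNReal.ofReal_eq_zero] at this
    linarith [hb.pos ht]
  have := SVp_of_G hfin h0 ?_
  · exact ⟨this.1, this.2, C, hC, hlow'⟩
  intro ε hε
  obtain ⟨C, hC, h⟩ := (hb ε hε).sym hε
  refine ⟨C, hC, fun s t L hs ht h1 h2 => ?_⟩
  have hl : 0 < t / s := by positivity
  have hL : 0 < L := by linarith
  have e := HN_scale_Ioi hl hr (fun u => ENNReal.ofReal (b u)) (t := s) hs.le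
  rw [div_mul_cancel₀ _ hs.ne'] at e
  rw [e, ← HN_const_mul hr _ ENNReal.ofReal_ne_top]
  refine HN_mono measurableSet_Ioi fun u hu => ?_
  have hu : 0 < u := hs.trans hu
  rw [← ENNReal.ofReal_mul (by positivity)]
  apply ENNReal.ofReal_le_ofReal
  refine h _ _ _ hu (by positivity) ?_ ?_
  · rwa [mul_div_cancel_right₀ _ hu.ne']
  · rw [show u / (t / s * u) = s / t by field_simp]; exact h2

lemma SVp_head {b : ℝ → ℝ} (hb : SVp b) {r : ℝ≥0∞} (hr : 0 < r)
    (hfin : HN r (Ioo 0 1) (fun u => ENNReal.ofReal (b u)) ≠ ∞) :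
    (∀ t, 0 < t → HN r (Ioo 0 t) (fun u => ENNReal.ofReal (b u)) ≠ ∞) ∧
    SVp (fun t => (HN r (Ioo 0 t) (fun u => ENNReal.ofReal (b u))).toReal) ∧
    ∃ C : ℝ≥0∞, C ≠ ∞ ∧ ∀ t, 0 < t →
      ENNReal.ofReal (b t) ≤ C * HN r (Ioo 0 t) (fun u => ENNReal.ofReal (b u)) := by
  obtain ⟨C, hC, hlow⟩ := HN_low (hb 1 one_pos) hr
  obtain ⟨C', hC', hs⟩ := (hb 1 one_pos).sym one_pos
  have hlow' : ∀ t, 0 < t → ENNReal.ofReal (b t) ≤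
      (ENNReal.ofReal (C' * 2 ^ (1:ℝ)) * C) * HN r (Ioo 0 t) (fun u => ENNReal.ofReal (b u)) := by
    intro t ht
    have h1 : b t ≤ C' * 2 ^ (1:ℝ) * b (t / 2) := by
      refine hs (t / 2) t 2 (by positivity) ht ?_ ?_
      · field_simp; rfl
      · rw [div_div, div_le_iff₀ (by positivity)]; nlinarith
    calc ENNReal.ofReal (b t) ≤ ENNReal.ofReal (C' * 2 ^ (1:ℝ)) * ENNReal.ofReal (b (t / 2)) := by
          rw [← ENNReal.ofReal_mul (by positivity)]
          exact ENNReal.ofReal_le_ofReal h1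
      _ ≤ ENNReal.ofReal (C' * 2 ^ (1:ℝ)) * (C * HN r (Ioo 0 t) (fun u => ENNReal.ofReal (b u))) := by
          gcongr
          refine (hlow _ (half_pos ht)).trans ?_
          gcongr
          refine HN_mono_set ?_ _
          intro u hu
          exact ⟨(half_pos ht).trans hu.1, by linarith [hu.2]⟩
      _ = _ := by ring
  have h0 : ∀ t, 0 < t → HN r (Ioo 0 t) (fun u => ENNReal.ofReal (b u)) ≠ 0 := by
    intro t ht h
    have := hlow' t ht
    rw [h, mul_zero, nonpos_iff_eq_zero, ENNReal.ofReal_eq_zero] at this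
    linarith [hb.pos ht]
  have := SVp_of_G hfin h0 ?_
  · exact ⟨this.1, this.2, _, ENNReal.mul_ne_top ENNReal.ofReal_ne_top hC, hlow'⟩
  intro ε hε
  obtain ⟨C, hC, h⟩ := (hb ε hε).sym hε
  refine ⟨C, hC, fun s t L hs ht h1 h2 => ?_⟩
  have hl : 0 < t / s := by positivity
  have hL : 0 < L := by linarith
  have e := HN_scale_Ioo hl hr (fun u => ENNReal.ofReal (b u)) (s := 0) (t := s) le_rfl
  rw [div_mul_cancel₀ _ hs.ne', mul_zero] at e
  rw [e, ← HN_const_mul hr _ ENNReal.ofReal_ne_top]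
  refine HN_mono measurableSet_Ioo fun u hu => ?_
  have hu : 0 < u := hu.1
  rw [← ENNReal.ofReal_mul (by positivity)]
  apply ENNReal.ofReal_le_ofReal
  refine h _ _ _ hu (by positivity) ?_ ?_
  · rwa [mul_div_cancel_right₀ _ hu.ne']
  · rw [show u / (t / s * u) = s / t by field_simp]; exact h2


def lr (r : ℝ≥0∞) (x : ℤ → ℝ≥0∞) : ℝ≥0∞ :=
  if r = ∞ then ⨆ j, x j else (∑' j, x j ^ r.toReal) ^ r⁻¹.toReal

def Doub (D : ℝ≥0∞) (F : ℝ → ℝ≥0∞) : Prop :=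
  ∀ u v, 0 < u → u ≤ v → v ≤ 2 * u → F u ≤ D * F v ∧ F v ≤ D * F u

lemma Ioi_eq_iUnion_dyadic : Ioi (0:ℝ) = ⋃ j : ℤ, Ico ((2:ℝ) ^ j) (2 ^ (j + 1)) := by
  ext u
  simp only [mem_Ioi, mem_iUnion]
  constructor
  · intro hu
    exact exists_mem_Ico_zpow hu one_lt_two
  · rintro ⟨j, hj⟩
    exact lt_of_lt_of_le (by positivity) hj.1

lemma disj_dyadic : Pairwise (Function.onFun Disjoint fun j : ℤ => Ico ((2:ℝ) ^ j) (2 ^ (j + 1))) := by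
  have : Monotone fun j : ℤ => (2:ℝ) ^ j := zpow_right_mono₀ one_le_two
  exact this.pairwise_disjoint_on_Ico_succ

lemma dyadic_mem {j : ℤ} {u : ℝ} (hu : u ∈ Ico ((2:ℝ) ^ j) (2 ^ (j + 1))) :
    0 < (2:ℝ) ^ j ∧ (2:ℝ) ^ j ≤ u ∧ u ≤ 2 * 2 ^ j := by
  refine ⟨by positivity, hu.1, ?_⟩
  have := hu.2
  rw [zpow_add_one₀ two_ne_zero] at this
  linarith

lemma rpow_inv_aux {r : ℝ≥0∞} (hr : 0 < r) (h : r ≠ ∞) (c x : ℝ≥0∞) :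
    (c ^ r.toReal * x) ^ r⁻¹.toReal = c * x ^ r⁻¹.toReal := by
  have hp := qpos hr h
  rw [ENNReal.mul_rpow_of_nonneg _ _ ENNReal.toReal_nonneg, ← ENNReal.rpow_mul, ENNReal.toReal_inv,
      mul_inv_cancel₀ hp.ne', ENNReal.rpow_one]

lemma disc {r D : ℝ≥0∞} (hr : 0 < r) (hD : D ≠ ∞) : ∃ C : ℝ≥0∞, C ≠ ∞ ∧ ∀ F, Doub D F →
    HN r (Ioi 0) F ≤ C * lr r (fun j => F (2 ^ j)) ∧
    lr r (fun j => F (2 ^ j)) ≤ C * HN r (Ioi 0) F := by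
  by_cases h : r = ∞
  · refine ⟨D, hD, fun F hF => ?_⟩
    have e : HN r (Ioi 0) F = essSup F (volume.restrict (Ioi 0)) := by
      simp [HN, LqNorm, h]
    rw [e]
    simp only [lr, h, if_true]
    constructor
    · refine essSup_le_of_ae_le _ ?_
      refine (ae_restrict_iff' measurableSet_Ioi).2 (Eventually.of_forall fun u hu => ?_)
      rw [Ioi_eq_iUnion_dyadic, mem_iUnion] at hu
      obtain ⟨j, hj⟩ := hu
      obtain ⟨h1, h2, h3⟩ := dyadic_mem hj
      refine ((hF _ _ h1 h2 h3).2).trans ?_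
      exact mul_le_mul_right (le_iSup (fun j : ℤ => F (2 ^ j)) j) D
    · refine iSup_le fun j => ?_
      have h1 := ENNReal.ae_le_essSup (μ := volume.restrict (Ioi (0:ℝ))) F
      have h2 : ∀ᵐ u ∂(volume.restrict (Ico ((2:ℝ) ^ j) (2 ^ (j + 1)))), F u ≤ essSup F (volume.restrict (Ioi 0)) := by
        refine ae_restrict_of_ae_restrict_of_subset ?_ h1
        intro u hu
        exact lt_of_lt_of_le (by positivity) hu.1
      rw [ae_restrict_iff' measurableSet_Ico] at h2
      have h3 : ∃ u, u ∈ Ico ((2:ℝ) ^ j) (2 ^ (j + 1)) ∧ F u ≤ essSup F (volume.restrict (Ioi 0)) := by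
        by_contra hcon
        push Not at hcon
        have h4 : ∀ᵐ u ∂(volume : Measure ℝ), u ∉ Ico ((2:ℝ) ^ j) (2 ^ (j + 1)) := by
          filter_upwards [h2] with u hu hmem
          exact absurd (hu hmem) (not_le.2 (hcon u hmem))
        have h5 : volume (Ico ((2:ℝ) ^ j) (2 ^ (j + 1))) = 0 := by
          rw [ae_iff] at h4
          simpa only [not_not, ofPred_mem_eq] using h4
        rw [Real.volume_Ico, ENNReal.ofReal_eq_zero, zpow_add_one₀ two_ne_zero] at h5
        have : 0 < (2:ℝ) ^ j := by positivity
        linarith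
      obtain ⟨u, hu, hle⟩ := h3
      obtain ⟨h1, h2, h3⟩ := dyadic_mem hu
      refine ((hF _ _ h1 h2 h3).1).trans ?_
      gcongr
  · have hp := qpos hr h
    refine ⟨D * 2 ^ r⁻¹.toReal, ENNReal.mul_ne_top hD
      (ENNReal.rpow_ne_top_of_nonneg ENNReal.toReal_nonneg (by simp)), fun F hF => ?_⟩
    have e1 : HN r (Ioi 0) F = (∑' j : ℤ, ∫⁻ u in Ico ((2:ℝ) ^ j) (2 ^ (j + 1)),
        ENNReal.ofReal (u⁻¹) * F u ^ r.toReal) ^ r⁻¹.toReal := by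
      simp only [HN, LqNorm, h, if_false]
      congr 1
      rw [← lintegral_iUnion (fun j => measurableSet_Ico) disj_dyadic, ← Ioi_eq_iUnion_dyadic]
      refine setLIntegral_congr_fun measurableSet_Ioi fun u hu => ?_
      have hu : 0 < u := hu
      rw [ENNReal.mul_rpow_of_nonneg _ _ hp.le, ENNReal.ofReal_rpow_of_pos (by positivity),
        ← Real.rpow_mul hu.le, ENNReal.toReal_inv, neg_mul, inv_mul_cancel₀ hp.ne', Real.rpow_neg_one]
    have b1 : ∀ j : ℤ, (∫⁻ u in Ico ((2:ℝ) ^ j) (2 ^ (j + 1)),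
        ENNReal.ofReal (u⁻¹) * F u ^ r.toReal) ≤ D ^ r.toReal * F (2 ^ j) ^ r.toReal := by
      intro j
      have hj : 0 < (2:ℝ) ^ j := by positivity
      calc _ ≤ ∫⁻ u in Ico ((2:ℝ) ^ j) (2 ^ (j + 1)), ENNReal.ofReal (((2:ℝ) ^ j)⁻¹) * (D * F (2 ^ j)) ^ r.toReal := by
            refine setLIntegral_mono' measurableSet_Ico fun u hu => ?_
            obtain ⟨h1, h2, h3⟩ := dyadic_mem hu
            gcongr
            exact (hF _ _ h1 h2 h3).2
        _ = _ := by
            rw [setLIntegral_const, Real.volume_Ico, mul_right_comm, ← ENNReal.ofReal_mul (by positivity),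
              zpow_add_one₀ two_ne_zero, show ((2:ℝ) ^ j)⁻¹ * ((2:ℝ) ^ j * 2 - 2 ^ j) = 1 by field_simp; norm_num,
              ENNReal.ofReal_one, one_mul, ENNReal.mul_rpow_of_nonneg _ _ hp.le]
    have b2 : ∀ j : ℤ, F (2 ^ j) ^ r.toReal ≤ (D ^ r.toReal * 2) * (∫⁻ u in Ico ((2:ℝ) ^ j) (2 ^ (j + 1)),
        ENNReal.ofReal (u⁻¹) * F u ^ r.toReal) := by
      intro j
      have hj : 0 < (2:ℝ) ^ j := by positivity
      calc F (2 ^ j) ^ r.toReal = 2 * ∫⁻ u in Ico ((2:ℝ) ^ j) (2 ^ (j + 1)), ENNReal.ofReal ((2 * (2:ℝ) ^ j)⁻¹) * F (2 ^ j) ^ r.toReal := by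
            rw [setLIntegral_const, Real.volume_Ico, mul_right_comm, ← ENNReal.ofReal_mul (by positivity),
              zpow_add_one₀ two_ne_zero, show (2 * (2:ℝ) ^ j)⁻¹ * ((2:ℝ) ^ j * 2 - 2 ^ j) = 2⁻¹ by field_simp; norm_num,
              ← mul_assoc, show (2:ℝ≥0∞) = ENNReal.ofReal 2 by simp, ← ENNReal.ofReal_mul (by norm_num)]
            norm_num
        _ ≤ 2 * ∫⁻ u in Ico ((2:ℝ) ^ j) (2 ^ (j + 1)), D ^ r.toReal * (ENNReal.ofReal (u⁻¹) * F u ^ r.toReal) := by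
            gcongr 2 * ?_
            refine setLIntegral_mono' measurableSet_Ico fun u hu => ?_
            obtain ⟨h1, h2, h3⟩ := dyadic_mem hu
            have hu0 : 0 < u := by linarith
            rw [mul_left_comm, ← ENNReal.mul_rpow_of_nonneg _ _ hp.le]
            gcongr
            exact (hF _ _ h1 h2 h3).1
        _ = _ := by
            rw [lintegral_const_mul' _ _ (ENNReal.rpow_ne_top_of_nonneg hp.le hD)]
            ring
    rw [e1]
    simp only [lr, h, if_false]
    constructor
    · calc _ ≤ (D ^ r.toReal * ∑' j : ℤ, F (2 ^ j) ^ r.toReal) ^ r⁻¹.toReal := by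
            refine ENNReal.rpow_le_rpow ?_ ENNReal.toReal_nonneg
            rw [← ENNReal.tsum_mul_left]
            exact ENNReal.tsum_le_tsum b1
        _ = D * (∑' j : ℤ, F (2 ^ j) ^ r.toReal) ^ r⁻¹.toReal := rpow_inv_aux hr h _ _
        _ ≤ _ := by
            gcongr
            refine le_mul_of_one_le_right (zero_le) (ENNReal.one_le_rpow (by norm_num) ?_)
            rw [ENNReal.toReal_inv]; positivity
    · calc _ ≤ (D ^ r.toReal * (2 * ∑' j : ℤ, ∫⁻ u in Ico ((2:ℝ) ^ j) (2 ^ (j + 1)),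
        ENNReal.ofReal (u⁻¹) * F u ^ r.toReal)) ^ r⁻¹.toReal := by
            refine ENNReal.rpow_le_rpow ?_ ENNReal.toReal_nonneg
            rw [← mul_assoc, ← ENNReal.tsum_mul_left]
            exact ENNReal.tsum_le_tsum b2
        _ = _ := by
            rw [rpow_inv_aux hr h, ENNReal.mul_rpow_of_nonneg _ _ ENNReal.toReal_nonneg, mul_assoc]

lemma schur {r : ℝ≥0∞} (hr : 0 < r) {D : ℝ≥0∞} (κ : ℤ → ℤ → ℝ≥0∞)
    (h1 : r = ∞ → ∀ k j, κ k j ≤ D) (h2 : r ≠ ∞ → ∀ j, ∑' k, κ k j ^ r.toReal ≤ D ^ r.toReal)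
    (x y : ℤ → ℝ≥0∞) (hxy : ∀ k, y k ≤ ⨆ j, κ k j * x j) : lr r y ≤ D * lr r x := by
  by_cases h : r = ∞
  · simp only [lr, h, if_true]
    refine iSup_le fun k => (hxy k).trans (iSup_le fun j => ?_)
    gcongr
    · exact h1 h k j
    · exact le_iSup x j
  · have hp := qpos hr h
    simp only [lr, h, if_false]
    rw [← rpow_inv_aux hr h]
    refine ENNReal.rpow_le_rpow ?_ ENNReal.toReal_nonneg
    calc ∑' k, y k ^ r.toReal ≤ ∑' k, ∑' j, κ k j ^ r.toReal * x j ^ r.toReal := by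
          refine ENNReal.tsum_le_tsum fun k => ?_
          have h3 : y k ≤ (∑' j, κ k j ^ r.toReal * x j ^ r.toReal) ^ (r.toReal)⁻¹ := by
            refine (hxy k).trans (iSup_le fun j => ?_)
            rw [ENNReal.le_rpow_inv_iff hp, ENNReal.mul_rpow_of_nonneg _ _ hp.le]
            exact ENNReal.le_tsum (f := fun j => κ k j ^ r.toReal * x j ^ r.toReal) j
          exact (ENNReal.le_rpow_inv_iff hp).1 h3
      _ = ∑' j, (∑' k, κ k j ^ r.toReal) * x j ^ r.toReal := by
          rw [ENNReal.tsum_comm]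
          exact tsum_congr fun j => ENNReal.tsum_mul_right
      _ ≤ ∑' j, D ^ r.toReal * x j ^ r.toReal := by
          refine ENNReal.tsum_le_tsum fun j => ?_
          gcongr
          exact h2 h j
      _ = _ := ENNReal.tsum_mul_left

lemma geom_sum {δ : ℝ} (hδ : 0 < δ) :
    ∑' k : ℤ, ENNReal.ofReal ((2:ℝ) ^ (-(δ * |(k:ℝ)|))) ≠ ∞ := by
  have hs : Summable (fun k : ℤ => (2:ℝ) ^ (-(δ * |(k:ℝ)|))) := by
    have hn : Summable (fun n : ℕ => (2:ℝ) ^ (-(δ * (n:ℝ)))) := by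
      have : ∀ n : ℕ, (2:ℝ) ^ (-(δ * (n:ℝ))) = ((2:ℝ) ^ (-δ)) ^ n := by
        intro n
        rw [← Real.rpow_natCast, ← Real.rpow_mul (by norm_num)]
        congr 1; ring
      simp_rw [this]
      refine summable_geometric_of_lt_one (by positivity) ?_
      exact Real.rpow_lt_one_of_one_lt_of_neg one_lt_two (by linarith)
    refine Summable.of_nat_of_neg ?_ ?_
    · simpa using hn
    · simpa using hn
  exact hs.tsum_ofReal_ne_top

lemma geom_sum_shift (δ : ℝ) (i : ℤ) :
    ∑' k : ℤ, ENNReal.ofReal ((2:ℝ) ^ (-(δ * |(k:ℝ) - i|))) =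
    ∑' k : ℤ, ENNReal.ofReal ((2:ℝ) ^ (-(δ * |(k:ℝ)|))) := by
  rw [← (Equiv.subRight i).tsum_eq (fun k : ℤ => ENNReal.ofReal ((2:ℝ) ^ (-(δ * |(k:ℝ)|))))]
  refine tsum_congr fun k => ?_
  simp


lemma Kf_mono (N₀ N₁ : E → ℝ≥0∞) {s t : ℝ} (h : s ≤ t) (f : E) : Kf N₀ N₁ s f ≤ Kf N₀ N₁ t f :=
  iInf_mono fun g => by gcongr

lemma Kf_scale (N₀ N₁ : E → ℝ≥0∞) {l : ℝ} (hl : 1 ≤ l) (t : ℝ) (f : E) :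
    Kf N₀ N₁ (l * t) f ≤ ENNReal.ofReal l * Kf N₀ N₁ t f := by
  unfold Kf
  rw [ENNReal.mul_iInf_of_ne (by simp; linarith) ENNReal.ofReal_ne_top]
  refine iInf_mono fun g => ?_
  rw [mul_add, ENNReal.ofReal_mul (by linarith), mul_assoc]
  gcongr
  exact le_mul_of_one_le_left zero_le (by simpa using hl)

lemma Kf_doub (N₀ N₁ : E → ℝ≥0∞) (f : E) : Doub 2 (fun u => Kf N₀ N₁ u f) := by
  intro u v hu huv hvu
  constructor
  · exact (Kf_mono N₀ N₁ huv f).trans (le_mul_of_one_le_left zero_le (by norm_num))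
  · refine (Kf_mono N₀ N₁ hvu f).trans ((Kf_scale N₀ N₁ one_le_two u f).trans ?_)
    simp

lemma Kf_le_left (A₀ A₁ : QuasiBanach E) (t : ℝ) (f : E) : Kf A₀.N A₁.N t f ≤ A₀.N f := by
  refine (iInf_le _ f).trans ?_
  simp [A₁.zero]

lemma Kf_le_right (A₀ A₁ : QuasiBanach E) (t : ℝ) (f : E) :
    Kf A₀.N A₁.N t f ≤ ENNReal.ofReal t * A₁.N f := by
  refine (iInf_le _ 0).trans ?_
  simp [A₀.zero]

lemma Kf_quasi (A₀ A₁ : QuasiBanach E) : ∃ C : ℝ≥0∞, C ≠ ∞ ∧ ∀ (t : ℝ) (f g h : E), g + h = f →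
    Kf A₀.N A₁.N t f ≤ C * (Kf A₀.N A₁.N t g + Kf A₀.N A₁.N t h) := by
  obtain ⟨C₀, h0, h0', hC₀⟩ := A₀.quasi
  obtain ⟨C₁, h1, h1', hC₁⟩ := A₁.quasi
  have hne : C₀ + C₁ ≠ ∞ := by simp [h0', h1']
  have hne0 : C₀ + C₁ ≠ 0 := by
    intro h; simp only [add_eq_zero] at h; rw [h.1] at h0; simp at h0
  refine ⟨C₀ + C₁, hne, fun t f g h hf => ?_⟩
  unfold Kf
  rw [ENNReal.iInf_add, ENNReal.mul_iInf_of_ne hne0 hne]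
  refine le_iInf fun g₁ => ?_
  rw [ENNReal.add_iInf, ENNReal.mul_iInf_of_ne hne0 hne]
  refine le_iInf fun h₁ => (iInf_le _ (g₁ + h₁)).trans ?_
  rw [show f - (g₁ + h₁) = (g - g₁) + (h - h₁) by rw [← hf]; abel]
  calc _ ≤ C₀ * (A₀.N g₁ + A₀.N h₁) + ENNReal.ofReal t * (C₁ * (A₁.N (g - g₁) + A₁.N (h - h₁))) := by
        gcongr
        · exact hC₀ _ _
        · exact hC₁ _ _
    _ ≤ (C₀ + C₁) * (A₀.N g₁ + A₀.N h₁) + ENNReal.ofReal t * ((C₀ + C₁) * (A₁.N (g - g₁) + A₁.N (h - h₁))) := by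
        gcongr
        · exact le_self_add
        · exact le_add_self
    _ = _ := by ring

lemma QuasiBanach.neg (A : QuasiBanach E) (x y : E) : A.N (x - y) = A.N (y - x) := by
  have := A.smul (-1) (x - y)
  simp at this
  rw [← this]

def X0 (N₀ N₁ : E → ℝ≥0∞) (r : ℝ≥0∞) (b : ℝ → ℝ) (f : E) : ℝ≥0∞ :=
  HN r (Ioi 0) (fun u => ENNReal.ofReal (b u) * Kf N₀ N₁ u f)

def X1 (N₀ N₁ : E → ℝ≥0∞) (σ : ℝ) (r q : ℝ≥0∞) (β a : ℝ → ℝ) (f : E) : ℝ≥0∞ :=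
  HN r (Ioi 0) (fun t => ENNReal.ofReal (β t) *
    HN q (Ioi t) (fun u => ENNReal.ofReal (u ^ (-σ) * a u) * Kf N₀ N₁ u f))

lemma X0_low (N₀ N₁ : E → ℝ≥0∞) {r : ℝ≥0∞} (hr : 0 < r) (b : ℝ → ℝ) (f : E) {t : ℝ} (ht : 0 < t) :
    HN r (Ioi t) (fun u => ENNReal.ofReal (b u)) * Kf N₀ N₁ t f ≤ X0 N₀ N₁ r b f := by
  refine le_trans ?_ (HN_mono_set (Ioi_subset_Ioi ht.le) _)
  rw [mul_comm]
  refine (HN_const_mul_ge hr _ _ _).trans ?_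
  refine HN_mono measurableSet_Ioi fun u hu => ?_
  rw [mul_comm]
  gcongr
  exact Kf_mono _ _ (le_of_lt hu) _

lemma X1_low {σ : ℝ} {r q : ℝ≥0∞} (hr : 0 < r) (hq : 0 < q) {a : ℝ → ℝ}
    (ha : SVp a) : ∃ C : ℝ≥0∞, C ≠ ∞ ∧ ∀ (N₀ N₁ : E → ℝ≥0∞) (β : ℝ → ℝ) (f : E) (t : ℝ), 0 < t →
    HN r (Ioo 0 t) (fun u => ENNReal.ofReal (β u)) *
      (ENNReal.ofReal (t ^ (-σ) * a t) * Kf N₀ N₁ t f) ≤ C * X1 N₀ N₁ σ r q β a f := by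
  obtain ⟨C, hC, h⟩ := HN_low (ha.pw (-σ) (sub_one_lt (-σ)) (lt_add_one (-σ))) hq
  refine ⟨C, hC, fun N₀ N₁ β f t ht => ?_⟩
  set Z := HN q (Ioo t (2 * t)) (fun u => ENNReal.ofReal (u ^ (-σ) * a u) * Kf N₀ N₁ u f) with hZ
  have h1 : ENNReal.ofReal (t ^ (-σ) * a t) * Kf N₀ N₁ t f ≤ C * Z := by
    calc _ ≤ C * HN q (Ioo t (2 * t)) (fun u => ENNReal.ofReal (u ^ (-σ) * a u)) * Kf N₀ N₁ t f := by
          gcongr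
          exact h t ht
      _ = C * (Kf N₀ N₁ t f * HN q (Ioo t (2 * t)) (fun u => ENNReal.ofReal (u ^ (-σ) * a u))) := by ring
      _ ≤ C * Z := by
          gcongr
          refine (HN_const_mul_ge hq _ _ _).trans (HN_mono measurableSet_Ioo fun u hu => ?_)
          rw [mul_comm]
          gcongr
          exact Kf_mono _ _ hu.1.le _
  calc _ ≤ HN r (Ioo 0 t) (fun u => ENNReal.ofReal (β u)) * (C * Z) := by gcongr
    _ = C * (Z * HN r (Ioo 0 t) (fun u => ENNReal.ofReal (β u))) := by ring
    _ ≤ _ := by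
      gcongr
      refine (HN_const_mul_ge hr _ _ _).trans ?_
      refine (HN_mono measurableSet_Ioo fun u hu => ?_).trans (HN_mono_set Ioo_subset_Ioi_self _)
      rw [mul_comm]
      gcongr
      refine HN_mono_set ?_ _
      intro v hv
      exact hu.2.trans hv.1

lemma ofReal_rpow_cancel {t : ℝ} (ht : 0 < t) (σ : ℝ) :
    ENNReal.ofReal (t ^ (-σ)) * ENNReal.ofReal (t ^ σ) = 1 := by
  rw [← ENNReal.ofReal_mul (by positivity), ← Real.rpow_add ht]
  simp

lemma point_low (A₀ A₁ : QuasiBanach E) {σ : ℝ} {r₀ r₁ q : ℝ≥0∞} (hr₀ : 0 < r₀) (hr₁ : 0 < r₁)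
    (hq : 0 < q) {b₀ β a ρ : ℝ → ℝ} (ha : SVp a)
    (hρ : ∀ t, 0 < t → ENNReal.ofReal (ρ t) * (HN r₁ (Ioo 0 t) (fun u => ENNReal.ofReal (β u)) *
      ENNReal.ofReal (a t)) = ENNReal.ofReal (t ^ σ) * HN r₀ (Ioi t) (fun u => ENNReal.ofReal (b₀ u))) :
    ∃ C : ℝ≥0∞, C ≠ ∞ ∧ ∀ f t, 0 < t →
      HN r₀ (Ioi t) (fun u => ENNReal.ofReal (b₀ u)) * Kf A₀.N A₁.N t f ≤
      C * Kf (X0 A₀.N A₁.N r₀ b₀) (X1 A₀.N A₁.N σ r₁ q β a) (ρ t) f := by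
  obtain ⟨C, hC, h1⟩ := X1_low (E := E) (σ := σ) hr₁ hq ha
  obtain ⟨C', hC', hQ⟩ := Kf_quasi A₀ A₁
  have hne : C' * (1 + C) ≠ ∞ := ENNReal.mul_ne_top hC' (by simp [hC])
  refine ⟨C' * (1 + C) + 1, by simp [hne], fun f t ht => ?_⟩
  nth_rw 2 [Kf]
  rw [ENNReal.mul_iInf_of_ne (by simp) (by simp [hne])]
  refine le_iInf fun g => ?_
  have e1 := X0_low A₀.N A₁.N hr₀ b₀ g ht
  have e2 := h1 A₀.N A₁.N β (f - g) t ht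
  set D := HN r₀ (Ioi t) (fun u => ENNReal.ofReal (b₀ u)) with hD
  set d := HN r₁ (Ioo 0 t) (fun u => ENNReal.ofReal (β u)) with hd
  have e3 : D * Kf A₀.N A₁.N t (f - g) ≤ C * (ENNReal.ofReal (ρ t) * X1 A₀.N A₁.N σ r₁ q β a (f - g)) := by
    calc D * Kf A₀.N A₁.N t (f - g) =
        ENNReal.ofReal (t ^ (-σ)) * (ENNReal.ofReal (t ^ σ) * D) * Kf A₀.N A₁.N t (f - g) := by
          rw [← mul_assoc, ofReal_rpow_cancel ht, one_mul]
      _ = ENNReal.ofReal (ρ t) * (d * (ENNReal.ofReal (t ^ (-σ) * a t) * Kf A₀.N A₁.N t (f - g))) := by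
          rw [← hρ t ht, ENNReal.ofReal_mul (by positivity)]; ring
      _ ≤ ENNReal.ofReal (ρ t) * (C * X1 A₀.N A₁.N σ r₁ q β a (f - g)) := by gcongr
      _ = _ := by ring
  calc D * Kf A₀.N A₁.N t f ≤ D * (C' * (Kf A₀.N A₁.N t g + Kf A₀.N A₁.N t (f - g))) := by
        gcongr
        exact hQ t f g (f - g) (by abel)
    _ = C' * (D * Kf A₀.N A₁.N t g + D * Kf A₀.N A₁.N t (f - g)) := by ring
    _ ≤ C' * (X0 A₀.N A₁.N r₀ b₀ g + C * (ENNReal.ofReal (ρ t) * X1 A₀.N A₁.N σ r₁ q β a (f - g))) := by gcongr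
    _ ≤ C' * ((1 + C) * X0 A₀.N A₁.N r₀ b₀ g + (1 + C) * (ENNReal.ofReal (ρ t) * X1 A₀.N A₁.N σ r₁ q β a (f - g))) := by
        gcongr
        · exact le_mul_of_one_le_left zero_le le_self_add
        · exact le_add_self
    _ = (C' * (1 + C)) * (X0 A₀.N A₁.N r₀ b₀ g + ENNReal.ofReal (ρ t) * X1 A₀.N A₁.N σ r₁ q β a (f - g)) := by ring
    _ ≤ _ := by
        gcongr
        exact le_self_add


lemma head_gen {a : ℝ → ℝ} (ha : SVp a) {σ p : ℝ} (hp : σ < p) {q : ℝ≥0∞} (hq : 0 < q) :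
    ∃ C : ℝ≥0∞, C ≠ ∞ ∧ ∀ (k : ℝ → ℝ≥0∞) (t : ℝ) (B : ℝ≥0∞), 0 < t → B ≠ ∞ →
      (∀ u, 0 < u → u < t → k u ≤ B * ENNReal.ofReal ((u / t) ^ p)) →
      HN q (Ioo 0 t) (fun u => ENNReal.ofReal (u ^ (-σ) * a u) * k u) ≤
        C * B * ENNReal.ofReal (t ^ (-σ) * a t) := by
  have hpw := ha.pw (p - σ) (α := (p - σ) / 2) (β := p - σ + 1) (by linarith) (by linarith)
  obtain ⟨C, hC, h⟩ := HN_head hpw (by linarith) hq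
  refine ⟨C, hC, fun k t B ht hB hk => ?_⟩
  calc _ ≤ HN q (Ioo 0 t) (fun u => (B * ENNReal.ofReal (t ^ (-p))) * ENNReal.ofReal (u ^ (p - σ) * a u)) := by
        refine HN_mono measurableSet_Ioo fun u hu => ?_
        have hu0 : 0 < u := hu.1
        calc _ ≤ ENNReal.ofReal (u ^ (-σ) * a u) * (B * ENNReal.ofReal ((u / t) ^ p)) := by
              gcongr; exact hk u hu.1 hu.2
          _ = B * (ENNReal.ofReal ((u / t) ^ p) * ENNReal.ofReal (u ^ (-σ) * a u)) := by ring
          _ = _ := by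
              rw [mul_assoc, ← ENNReal.ofReal_mul (by positivity), ← ENNReal.ofReal_mul (by positivity)]
              congr 2
              rw [Real.div_rpow hu0.le ht.le, Real.rpow_neg ht.le, Real.rpow_sub hu0, Real.rpow_neg hu0.le]
              field_simp
    _ = (B * ENNReal.ofReal (t ^ (-p))) * HN q (Ioo 0 t) (fun u => ENNReal.ofReal (u ^ (p - σ) * a u)) :=
        HN_const_mul hq _ (ENNReal.mul_ne_top hB ENNReal.ofReal_ne_top) _
    _ ≤ (B * ENNReal.ofReal (t ^ (-p))) * (C * ENNReal.ofReal (t ^ (p - σ) * a t)) := by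
        gcongr; exact h t ht
    _ = C * B * (ENNReal.ofReal (t ^ (-p)) * ENNReal.ofReal (t ^ (p - σ) * a t)) := by ring
    _ = _ := by
        rw [← ENNReal.ofReal_mul (by positivity), ← mul_assoc, ← Real.rpow_add ht]
        congr 4; ring

lemma tail_gen {a : ℝ → ℝ} (ha : SVp a) {σ p : ℝ} (hp : p < σ) {q : ℝ≥0∞} (hq : 0 < q) :
    ∃ C : ℝ≥0∞, C ≠ ∞ ∧ ∀ (k : ℝ → ℝ≥0∞) (t s : ℝ) (B : ℝ≥0∞), 0 < t → t ≤ s → B ≠ ∞ →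
      (∀ u, s < u → k u ≤ B * ENNReal.ofReal ((u / t) ^ p)) →
      HN q (Ioi s) (fun u => ENNReal.ofReal (u ^ (-σ) * a u) * k u) ≤
        C * B * (ENNReal.ofReal ((s / t) ^ p) * ENNReal.ofReal (s ^ (-σ) * a s)) := by
  have hpw := ha.pw (p - σ) (α := p - σ - 1) (β := (p - σ) / 2) (by linarith) (by linarith)
  obtain ⟨C, hC, h⟩ := HN_tail hpw (by linarith) hq
  refine ⟨C, hC, fun k t s B ht hs hB hk => ?_⟩
  have hs0 : 0 < s := by linarith
  have key : ∀ u, 0 < u → ENNReal.ofReal ((u / t) ^ p) * ENNReal.ofReal (u ^ (-σ) * a u) =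
      ENNReal.ofReal (t ^ (-p)) * ENNReal.ofReal (u ^ (p - σ) * a u) := by
    intro u hu0
    rw [← ENNReal.ofReal_mul (by positivity), ← ENNReal.ofReal_mul (by positivity)]
    congr 1
    rw [Real.div_rpow hu0.le ht.le, Real.rpow_neg ht.le, Real.rpow_sub hu0, Real.rpow_neg hu0.le]
    field_simp
  calc _ ≤ HN q (Ioi s) (fun u => (B * ENNReal.ofReal (t ^ (-p))) * ENNReal.ofReal (u ^ (p - σ) * a u)) := by
        refine HN_mono measurableSet_Ioi fun u hu => ?_
        have hu0 : 0 < u := hs0.trans hu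
        calc _ ≤ ENNReal.ofReal (u ^ (-σ) * a u) * (B * ENNReal.ofReal ((u / t) ^ p)) := by
              gcongr; exact hk u hu
          _ = B * (ENNReal.ofReal ((u / t) ^ p) * ENNReal.ofReal (u ^ (-σ) * a u)) := by ring
          _ = _ := by
              rw [key u hu0, mul_assoc]
    _ = (B * ENNReal.ofReal (t ^ (-p))) * HN q (Ioi s) (fun u => ENNReal.ofReal (u ^ (p - σ) * a u)) :=
        HN_const_mul hq _ (ENNReal.mul_ne_top hB ENNReal.ofReal_ne_top) _
    _ ≤ (B * ENNReal.ofReal (t ^ (-p))) * (C * ENNReal.ofReal (s ^ (p - σ) * a s)) := by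
        gcongr; exact h s hs0
    _ = C * B * (ENNReal.ofReal (t ^ (-p)) * ENNReal.ofReal (s ^ (p - σ) * a s)) := by ring
    _ = _ := by rw [key s hs0]

lemma X0_up {b : ℝ → ℝ} (hb : SVp b) {p : ℝ} (hp : 0 < p) {r : ℝ≥0∞} (hr : 0 < r) {L : ℝ≥0∞} (hL : L ≠ ∞)
    (hbL : ∀ t, 0 < t → ENNReal.ofReal (b t) ≤ L * HN r (Ioi t) (fun u => ENNReal.ofReal (b u))) :
    ∃ C : ℝ≥0∞, C ≠ ∞ ∧ ∀ (k : ℝ → ℝ≥0∞) (t : ℝ) (B : ℝ≥0∞), 0 < t → B ≠ ∞ →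
      (∀ u, 0 < u → u < t → k u ≤ B * ENNReal.ofReal ((u / t) ^ p)) → (∀ u, t < u → k u ≤ B) →
      HN r (Ioi 0) (fun u => ENNReal.ofReal (b u) * k u) ≤
        C * (HN r (Ioi t) (fun u => ENNReal.ofReal (b u)) * B) := by
  obtain ⟨C, hC, h⟩ := head_gen hb hp hr
  obtain ⟨S, hS, hsp⟩ := HN_split hr
  refine ⟨S * (C * L + 1), ENNReal.mul_ne_top hS (by simp [ENNReal.mul_ne_top hC hL]), fun k t B ht hB h1 h2 => ?_⟩
  have e1 := h k t B ht hB h1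
  simp only [neg_zero, Real.rpow_zero, one_mul] at e1
  have e2 : HN r (Ioi t) (fun u => ENNReal.ofReal (b u) * k u) ≤
      B * HN r (Ioi t) (fun u => ENNReal.ofReal (b u)) := by
    rw [← HN_const_mul hr _ hB]
    refine HN_mono measurableSet_Ioi fun u hu => ?_
    rw [mul_comm]; gcongr; exact h2 u hu
  refine (hsp 0 t _ ht).trans ?_
  calc _ ≤ S * (C * B * (L * HN r (Ioi t) (fun u => ENNReal.ofReal (b u))) +
        B * HN r (Ioi t) (fun u => ENNReal.ofReal (b u))) := by
        gcongr
        refine e1.trans ?_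
        gcongr
        exact hbL t ht
    _ = _ := by ring

lemma X1_up {β a : ℝ → ℝ} (hβ : SVp β) (ha : SVp a) {σ P : ℝ} (hP : P < σ) (hσ : σ < 1)
    {r q : ℝ≥0∞} (hr : 0 < r) (hq : 0 < q) {L : ℝ≥0∞} (hL : L ≠ ∞)
    (hbL : ∀ t, 0 < t → ENNReal.ofReal (β t) ≤ L * HN r (Ioo 0 t) (fun u => ENNReal.ofReal (β u))) :
    ∃ C : ℝ≥0∞, C ≠ ∞ ∧ ∀ (k : ℝ → ℝ≥0∞) (t : ℝ) (B : ℝ≥0∞), 0 < t → B ≠ ∞ →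
      (∀ u, 0 < u → u < t → k u ≤ B * ENNReal.ofReal ((u / t) ^ (1:ℝ))) →
      (∀ u, t < u → k u ≤ B * ENNReal.ofReal ((u / t) ^ P)) →
      HN r (Ioi 0) (fun s => ENNReal.ofReal (β s) *
        HN q (Ioi s) (fun u => ENNReal.ofReal (u ^ (-σ) * a u) * k u)) ≤
        C * (HN r (Ioo 0 t) (fun u => ENNReal.ofReal (β u)) * ENNReal.ofReal (t ^ (-σ) * a t) * B) := by
  obtain ⟨C₁, hC₁, hhead⟩ := head_gen ha hσ hq
  obtain ⟨C₂, hC₂, htail⟩ := tail_gen ha hP hq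
  obtain ⟨C₃, hC₃, htail'⟩ := tail_gen (hβ.mul ha) hP hr
  obtain ⟨S, hS, hsp⟩ := HN_split hr
  obtain ⟨S', hS', hsp'⟩ := HN_split hq
  refine ⟨S * (S' * (C₁ + C₂) + C₃ * C₂ * L), ENNReal.mul_ne_top hS ?_, fun k t B ht hB h1 h2 => ?_⟩
  · exact ENNReal.add_ne_top.2 ⟨ENNReal.mul_ne_top hS' (ENNReal.add_ne_top.2 ⟨hC₁, hC₂⟩),
      ENNReal.mul_ne_top (ENNReal.mul_ne_top hC₃ hC₂) hL⟩
  set J := fun s => HN q (Ioi s) (fun u => ENNReal.ofReal (u ^ (-σ) * a u) * k u) with hJ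
  set d := HN r (Ioo 0 t) (fun u => ENNReal.ofReal (β u)) with hd
  set w := ENNReal.ofReal (t ^ (-σ) * a t) with hw
  have j1 : ∀ s, t ≤ s → J s ≤ C₂ * B * (ENNReal.ofReal ((s / t) ^ P) * ENNReal.ofReal (s ^ (-σ) * a s)) :=
    fun s hs => htail k t s B ht hs hB fun u hu => h2 u (lt_of_le_of_lt hs hu)
  have j1t : J t ≤ C₂ * B * w := by
    have := j1 t le_rfl
    rwa [div_self ht.ne', Real.one_rpow, ENNReal.ofReal_one, one_mul] at this
  have j2 : ∀ s, 0 < s → s < t → J s ≤ S' * (C₁ + C₂) * w * B := by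
    intro s hs0 hs
    refine (hsp' s t _ hs).trans ?_
    calc _ ≤ S' * (C₁ * B * w + C₂ * B * w) := by
          gcongr
          refine (HN_mono_set (Ioo_subset_Ioo_left hs0.le) _).trans ?_
          exact hhead k t B ht hB h1
      _ = _ := by ring
  have o1 : HN r (Ioo 0 t) (fun s => ENNReal.ofReal (β s) * J s) ≤ (S' * (C₁ + C₂) * w * B) * d := by
    rw [hd, ← HN_const_mul hr]
    · refine HN_mono measurableSet_Ioo fun s hs => ?_
      rw [mul_comm]; gcongr; exact j2 s hs.1 hs.2
    · exact ENNReal.mul_ne_top (ENNReal.mul_ne_top (ENNReal.mul_ne_top hS' (ENNReal.add_ne_top.2 ⟨hC₁, hC₂⟩)) ENNReal.ofReal_ne_top) hB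
  have o2 : HN r (Ioi t) (fun s => ENNReal.ofReal (β s) * J s) ≤ C₃ * (C₂ * B) * (L * d * w) := by
    have := htail' (fun s => (C₂ * B) * ENNReal.ofReal ((s / t) ^ P)) t t (C₂ * B) ht le_rfl
      (ENNReal.mul_ne_top hC₂ hB) (fun u hu => le_rfl)
    refine (HN_mono measurableSet_Ioi fun s hs => ?_).trans (this.trans ?_)
    · have hs0 : 0 < s := ht.trans hs
      have hβ0 := hβ.pos hs0
      calc _ ≤ ENNReal.ofReal (β s) * (C₂ * B * (ENNReal.ofReal ((s / t) ^ P) * ENNReal.ofReal (s ^ (-σ) * a s))) := by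
            gcongr; exact j1 s (le_of_lt hs)
        _ = _ := by
            rw [show s ^ (-σ) * (β s * a s) = β s * (s ^ (-σ) * a s) by ring, ENNReal.ofReal_mul hβ0.le]
            ring
    · rw [div_self ht.ne', Real.one_rpow, ENNReal.ofReal_one, one_mul]
      gcongr
      rw [show t ^ (-σ) * (β t * a t) = β t * (t ^ (-σ) * a t) by ring, ENNReal.ofReal_mul (hβ.pos ht).le]
      gcongr
      exact hbL t ht
  refine (hsp 0 t _ ht).trans ?_
  calc _ ≤ S * ((S' * (C₁ + C₂) * w * B) * d + C₃ * (C₂ * B) * (L * d * w)) := by gcongr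
    _ = _ := by ring

lemma point_up (A₀ A₁ : QuasiBanach E) {σ p P : ℝ} (hp : 0 < p) (hp1 : p ≤ 1) (hP0 : 0 ≤ P) (hP : P < σ)
    (hσ : σ < 1) {r₀ r₁ q : ℝ≥0∞} (hr₀ : 0 < r₀) (hr₁ : 0 < r₁)
    (hq : 0 < q) {b₀ β a ρ : ℝ → ℝ} (hb₀ : SVp b₀) (hβ : SVp β) (ha : SVp a)
    (hρ : ∀ t, 0 < t → ENNReal.ofReal (ρ t) * (HN r₁ (Ioo 0 t) (fun u => ENNReal.ofReal (β u)) *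
      ENNReal.ofReal (a t)) = ENNReal.ofReal (t ^ σ) * HN r₀ (Ioi t) (fun u => ENNReal.ofReal (b₀ u)))
    {L₀ L₁ : ℝ≥0∞} (hL₀ : L₀ ≠ ∞) (hL₁ : L₁ ≠ ∞)
    (hbL₀ : ∀ t, 0 < t → ENNReal.ofReal (b₀ t) ≤ L₀ * HN r₀ (Ioi t) (fun u => ENNReal.ofReal (b₀ u)))
    (hbL₁ : ∀ t, 0 < t → ENNReal.ofReal (β t) ≤ L₁ * HN r₁ (Ioo 0 t) (fun u => ENNReal.ofReal (β u))) :
    ∃ C : ℝ≥0∞, C ≠ ∞ ∧ ∀ (f : E) (t : ℝ) (B : ℝ≥0∞), 0 < t → B ≠ 0 → B ≠ ∞ →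
      (∀ u, 0 < u → u ≤ t → Kf A₀.N A₁.N u f ≤ B * ENNReal.ofReal ((u / t) ^ p)) →
      (∀ u, t ≤ u → Kf A₀.N A₁.N u f ≤ B * ENNReal.ofReal ((u / t) ^ P)) →
      Kf (X0 A₀.N A₁.N r₀ b₀) (X1 A₀.N A₁.N σ r₁ q β a) (ρ t) f ≤
      C * (HN r₀ (Ioi t) (fun u => ENNReal.ofReal (b₀ u)) * B) := by
  obtain ⟨C₀, hC₀, h0⟩ := X0_up hb₀ hp hr₀ hL₀ hbL₀
  obtain ⟨C₁, hC₁, h1⟩ := X1_up hβ ha hP hσ hr₁ hq hL₁ hbL₁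
  obtain ⟨Q, hQ, hquasi⟩ := Kf_quasi A₀ A₁
  have hQ3 : Q * 3 + 2 ≠ ∞ := ENNReal.add_ne_top.2 ⟨ENNReal.mul_ne_top hQ (by simp), by simp⟩
  refine ⟨(C₀ + C₁) * (Q * 3 + 2), ENNReal.mul_ne_top (ENNReal.add_ne_top.2 ⟨hC₀, hC₁⟩) hQ3,
    fun f t B ht hB0 hB hu1 hu2 => ?_⟩
  have hKt : Kf A₀.N A₁.N t f < 2 * B := by
    have := hu1 t ht le_rfl
    rw [div_self ht.ne', Real.one_rpow, ENNReal.ofReal_one, mul_one] at this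
    refine lt_of_le_of_lt this ?_
    rw [two_mul]
    exact ENNReal.lt_add_right hB hB0
  unfold Kf at hKt
  obtain ⟨g, hg⟩ := iInf_lt_iff.1 hKt
  have g0 : A₀.N g ≤ 2 * B := le_self_add.trans hg.le
  have g1 : ENNReal.ofReal t * A₁.N (f - g) ≤ 2 * B := le_add_self.trans hg.le
  have g1' : ∀ u, 0 < u → ENNReal.ofReal u * A₁.N (f - g) ≤ 2 * B * ENNReal.ofReal (u / t) := by
    intro u hu
    calc ENNReal.ofReal u * A₁.N (f - g) = ENNReal.ofReal (u / t) * (ENNReal.ofReal t * A₁.N (f - g)) := by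
          rw [← mul_assoc, ← ENNReal.ofReal_mul (by positivity), div_mul_cancel₀ _ ht.ne']
      _ ≤ ENNReal.ofReal (u / t) * (2 * B) := by gcongr
      _ = _ := by ring
  set M := (Q * 3 + 2) * B with hM
  have hMf : M ≠ ∞ := ENNReal.mul_ne_top hQ3 hB
  have hM2 : 2 * B ≤ M := by rw [hM]; gcongr; exact le_add_self
  have hM3 : Q * (3 * B) ≤ M := by rw [hM, ← mul_assoc]; gcongr; exact le_self_add
  have k1 : ∀ u, 0 < u → u < t → Kf A₀.N A₁.N u g ≤ M * ENNReal.ofReal ((u / t) ^ p) := by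
    intro u hu hut
    have hle : u / t ≤ (u / t) ^ p := by
      conv_lhs => rw [← Real.rpow_one (u / t)]
      exact Real.rpow_le_rpow_of_exponent_ge (by positivity) ((div_le_one ht).2 hut.le) hp1
    calc Kf A₀.N A₁.N u g ≤ Q * (Kf A₀.N A₁.N u f + Kf A₀.N A₁.N u (g - f)) :=
          hquasi u g f (g - f) (by abel)
      _ ≤ Q * (B * ENNReal.ofReal ((u / t) ^ p) + 2 * B * ENNReal.ofReal ((u / t) ^ p)) := by
          gcongr
          · exact hu1 u hu hut.le
          · refine (Kf_le_right A₀ A₁ u _).trans ?_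
            rw [A₁.neg]
            refine (g1' u hu).trans ?_
            gcongr
      _ = Q * (3 * B) * ENNReal.ofReal ((u / t) ^ p) := by ring
      _ ≤ _ := by gcongr
  have k2 : ∀ u, t < u → Kf A₀.N A₁.N u g ≤ M := fun u _ =>
    (Kf_le_left A₀ A₁ u g).trans (g0.trans hM2)
  have k3 : ∀ u, 0 < u → u < t → Kf A₀.N A₁.N u (f - g) ≤ M * ENNReal.ofReal ((u / t) ^ (1:ℝ)) := by
    intro u hu hut
    rw [Real.rpow_one]
    refine (Kf_le_right A₀ A₁ u _).trans ((g1' u hu).trans ?_)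
    gcongr
  have k4 : ∀ u, t < u → Kf A₀.N A₁.N u (f - g) ≤ M * ENNReal.ofReal ((u / t) ^ P) := by
    intro u hut
    have hle : 1 ≤ ENNReal.ofReal ((u / t) ^ P) := by
      rw [ENNReal.one_le_ofReal]
      exact Real.one_le_rpow (one_le_div_aux ht hut.le) hP0
    calc Kf A₀.N A₁.N u (f - g) ≤ Q * (Kf A₀.N A₁.N u f + Kf A₀.N A₁.N u ((-1:ℝ) • g)) :=
          hquasi u (f - g) f ((-1:ℝ) • g) (by rw [neg_one_smul]; abel)
      _ ≤ Q * (B * ENNReal.ofReal ((u / t) ^ P) + 2 * B * ENNReal.ofReal ((u / t) ^ P)) := by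
          gcongr
          · exact hu2 u hut.le
          · refine (Kf_le_left A₀ A₁ u _).trans ?_
            rw [A₀.smul]
            simp only [abs_neg, abs_one, ENNReal.ofReal_one, one_mul]
            exact g0.trans (le_mul_of_one_le_right zero_le hle)
      _ = Q * (3 * B) * ENNReal.ofReal ((u / t) ^ P) := by ring
      _ ≤ _ := by gcongr
  have e0 := h0 _ t M ht hMf k1 k2
  have e1 := h1 _ t M ht hMf k3 k4
  set D := HN r₀ (Ioi t) (fun u => ENNReal.ofReal (b₀ u)) with hD
  set d := HN r₁ (Ioo 0 t) (fun u => ENNReal.ofReal (β u)) with hd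
  refine (iInf_le _ g).trans ?_
  calc _ ≤ C₀ * (D * M) + ENNReal.ofReal (ρ t) * (C₁ * (d * ENNReal.ofReal (t ^ (-σ) * a t) * M)) := by
        gcongr
        · exact e0
        · exact e1
    _ = C₀ * (D * M) + C₁ * (ENNReal.ofReal (t ^ (-σ)) * (ENNReal.ofReal (ρ t) * (d * ENNReal.ofReal (a t))) * M) := by
        rw [ENNReal.ofReal_mul (by positivity)]; ring
    _ = C₀ * (D * M) + C₁ * (D * M) := by
        rw [hρ t ht, ← mul_assoc (ENNReal.ofReal (t ^ (-σ))), ofReal_rpow_cancel ht, one_mul]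
    _ = _ := by rw [hM]; ring


def KL (K : ℝ → ℝ≥0∞) : Prop :=
  ∀ s t, 0 < s → s ≤ t → K s ≤ K t ∧ K t ≤ ENNReal.ofReal (t / s) * K s

lemma Kf_KL (N₀ N₁ : E → ℝ≥0∞) (f : E) : KL (fun u => Kf N₀ N₁ u f) := by
  intro s t hs hst
  refine ⟨Kf_mono _ _ hst f, ?_⟩
  have := Kf_scale N₀ N₁ (one_le_div_aux hs hst) s f
  rwa [div_mul_cancel₀ _ hs.ne'] at this

lemma compare {w : ℝ → ℝ} {α β : ℝ} (hw : PW w α β) {L : ℝ} (hL : 1 ≤ L) :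
    ∃ D : ℝ, 0 < D ∧ ∀ K, KL K → ∀ u v, 0 < u → u ≤ v → v ≤ L * u →
      ENNReal.ofReal (w u) * K u ≤ ENNReal.ofReal D * (ENNReal.ofReal (w v) * K v) ∧
      ENNReal.ofReal (w v) * K v ≤ ENNReal.ofReal D * (ENNReal.ofReal (w u) * K u) := by
  obtain ⟨hp, C, hC, h⟩ := hw
  have hL0 : 0 < L := by linarith
  refine ⟨C * L ^ |α| + C * L ^ |β| * L, by positivity, fun K hK u v hu huv hvL => ?_⟩
  have hv : 0 < v := by linarith
  have h1 := one_le_div_aux hu huv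
  have h2 : v / u ≤ L := by rw [div_le_iff₀ hu]; exact hvL
  have h0 : 0 < v / u := by positivity
  obtain ⟨h3, h4⟩ := h u v hu huv
  obtain ⟨k1, k2⟩ := hK u v hu huv
  have wu := hp u hu
  have wv := hp v hv
  have hb : (v / u) ^ β ≤ L ^ |β| :=
    (Real.rpow_le_rpow_of_exponent_le h1 (le_abs_self β)).trans
      (Real.rpow_le_rpow h0.le h2 (abs_nonneg _))
  have ha : (v / u) ^ (-α) ≤ L ^ |α| :=
    (Real.rpow_le_rpow_of_exponent_le h1 (neg_le_abs α)).trans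
      (Real.rpow_le_rpow h0.le h2 (abs_nonneg _))
  have e1 : w u ≤ C * L ^ |α| * w v := by
    calc w u = (v / u) ^ (-α) * ((v / u) ^ α * w u) := by
          rw [← mul_assoc, ← Real.rpow_add h0]; simp
      _ ≤ L ^ |α| * (C * w v) := by gcongr
      _ = _ := by ring
  have e2 : w v ≤ C * L ^ |β| * w u := h3.trans (by gcongr)
  have p1 : 0 ≤ C * L ^ |α| := by positivity
  have p2 : 0 ≤ C * L ^ |β| * L := by positivity
  constructor
  · rw [← mul_assoc, ← ENNReal.ofReal_mul (by positivity)]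
    refine mul_le_mul' (ENNReal.ofReal_le_ofReal ?_) k1
    refine e1.trans ?_
    gcongr; linarith
  · calc ENNReal.ofReal (w v) * K v ≤ ENNReal.ofReal (C * L ^ |β| * w u) * (ENNReal.ofReal L * K u) := by
          gcongr
          refine k2.trans ?_
          gcongr
      _ = ENNReal.ofReal (C * L ^ |β| * L) * (ENNReal.ofReal (w u) * K u) := by
          rw [ENNReal.ofReal_mul (p := C * L ^ |β|) (q := w u) (by positivity),
            ENNReal.ofReal_mul (p := C * L ^ |β|) (q := L) (by positivity)]; ring
      _ ≤ _ := by
          gcongr; linarith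

lemma schur2 {r : ℝ≥0∞} (hr : 0 < r) {D T : ℝ≥0∞} (hD : D ≠ ∞) (hT : T ≠ ∞) (κ : ℤ → ℤ → ℝ≥0∞)
    (h1 : ∀ k j, κ k j ≤ D) (h2 : r ≠ ∞ → ∀ j, ∑' k, κ k j ^ r.toReal ≤ T) :
    ∃ C : ℝ≥0∞, C ≠ ∞ ∧ ∀ x y : ℤ → ℝ≥0∞, (∀ k, y k ≤ ⨆ j, κ k j * x j) → lr r y ≤ C * lr r x := by
  refine ⟨D + T ^ r.toReal⁻¹, ENNReal.add_ne_top.2 ⟨hD, ENNReal.rpow_ne_top_of_nonneg (by positivity) hT⟩,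
    fun x y hxy => schur hr κ (fun _ k j => (h1 k j).trans le_self_add) (fun h j => ?_) x y hxy⟩
  have hr' : 0 < r.toReal := ENNReal.toReal_pos hr.ne' h
  refine (h2 h j).trans ?_
  calc T = (T ^ r.toReal⁻¹) ^ r.toReal := by
        rw [← ENNReal.rpow_mul, inv_mul_cancel₀ hr'.ne', ENNReal.rpow_one]
    _ ≤ _ := by gcongr; exact le_add_self

lemma imap {ρ : ℝ → ℝ} {α β : ℝ} (hρ : PW ρ α β) (hα : 0 < α) (hβ : 0 < β) :
    ∃ i : ℤ → ℤ, ∃ N : ℝ, 0 ≤ N ∧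
      (∀ j, (2:ℝ) ^ (i j) ≤ ρ (2 ^ j) ∧ ρ (2 ^ j) ≤ 2 * 2 ^ (i j)) ∧
      (∀ j j' : ℤ, α * |(j:ℝ) - j'| ≤ N + |(i j : ℝ) - i j'| ∧ |(i j : ℝ) - i j'| ≤ N + β * |(j:ℝ) - j'|) ∧
      ∀ k : ℤ, ∃ m : ℤ, i m ≤ k ∧ (k:ℝ) ≤ i m + N := by
  have hex : ∀ j : ℤ, ∃ n : ℤ, ρ (2 ^ j) ∈ Ico ((2:ℝ) ^ n) (2 ^ (n + 1)) := fun j =>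
    exists_mem_Ico_zpow (hρ.pos (by positivity)) one_lt_two
  choose i hi using hex
  obtain ⟨hp, C, hC, h⟩ := hρ
  set c := |Real.logb 2 C| with hc
  have hCle : C ≤ 2 ^ c := by
    calc C = 2 ^ Real.logb 2 C := (Real.rpow_logb (by norm_num) (by norm_num) hC).symm
      _ ≤ _ := Real.rpow_le_rpow_of_exponent_le one_le_two (le_abs_self _)
  have hc0 : 0 ≤ c := abs_nonneg _
  have key : ∀ j j' : ℤ, j ≤ j' → α * ((j':ℝ) - j) ≤ (c + 1) + ((i j':ℝ) - i j) ∧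
      ((i j':ℝ) - i j) ≤ (c + 1) + β * ((j':ℝ) - j) := by
    intro j j' hj
    have hq : ((2:ℝ) ^ j' / 2 ^ j) = 2 ^ ((j':ℝ) - j) := by
      rw [Real.rpow_sub (by norm_num), Real.rpow_intCast, Real.rpow_intCast]
    obtain ⟨h1, h2⟩ := h (2 ^ j) (2 ^ j') (by positivity) (zpow_le_zpow_right₀ one_le_two hj)
    rw [hq, ← Real.rpow_mul (by norm_num)] at h1 h2
    obtain ⟨a1, a2⟩ := hi j
    obtain ⟨b1, b2⟩ := hi j'
    rw [← Real.rpow_intCast 2 (i j)] at a1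
    rw [← Real.rpow_intCast 2 (i j + 1)] at a2
    rw [← Real.rpow_intCast 2 (i j')] at b1
    rw [← Real.rpow_intCast 2 (i j' + 1)] at b2
    constructor
    · have : (2:ℝ) ^ (((j':ℝ) - j) * α + i j) ≤ 2 ^ (c + ((i j' + 1 : ℤ) : ℝ)) := by
        rw [Real.rpow_add (by norm_num), Real.rpow_add (by norm_num)]
        calc _ ≤ (2:ℝ) ^ (((j':ℝ) - j) * α) * ρ (2 ^ j) := by gcongr
          _ ≤ C * ρ (2 ^ j') := h2
          _ ≤ _ := by gcongr; exact (hp _ (by positivity)).le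
      rw [Real.rpow_le_rpow_left_iff (by norm_num)] at this
      push_cast at this
      linarith
    · have : (2:ℝ) ^ ((i j' : ℝ)) ≤ 2 ^ (c + ((j':ℝ) - j) * β + ((i j + 1 : ℤ) : ℝ)) := by
        rw [Real.rpow_add (by norm_num), Real.rpow_add (by norm_num)]
        calc _ ≤ ρ (2 ^ j') := by gcongr
          _ ≤ _ := h1
          _ ≤ _ := by gcongr; exact (hp _ (by positivity)).le
      rw [Real.rpow_le_rpow_left_iff (by norm_num)] at this
      push_cast at this
      linarith
  refine ⟨i, c + 1 + β, by positivity, fun j => ⟨(hi j).1, ?_⟩, ?_, ?_⟩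
  · have := (hi j).2.le
    rwa [zpow_add_one₀ (by norm_num), mul_comm] at this
  · have key2 : ∀ j j' : ℤ, j ≤ j' → α * |(j:ℝ) - j'| ≤ c + 1 + β + |(i j : ℝ) - i j'| ∧
        |(i j : ℝ) - i j'| ≤ c + 1 + β + β * |(j:ℝ) - j'| := by
      intro j j' hj
      obtain ⟨k1, k2⟩ := key j j' hj
      have hj' : (j:ℝ) ≤ j' := by exact_mod_cast hj
      rw [abs_sub_comm (j:ℝ), abs_of_nonneg (sub_nonneg.2 hj'), abs_sub_comm (i j : ℝ)]
      have : 0 ≤ α * ((j':ℝ) - j) := mul_nonneg hα.le (by linarith)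
      have : 0 ≤ β * ((j':ℝ) - j) := mul_nonneg hβ.le (by linarith)
      refine ⟨by linarith [le_abs_self ((i j':ℝ) - i j)], ?_⟩
      rw [abs_le]; constructor <;> linarith
    intro j j'
    rcases le_total j j' with hj | hj
    · exact key2 j j' hj
    · have := key2 j' j hj
      rwa [abs_sub_comm (j':ℝ), abs_sub_comm (i j':ℝ)] at this
  · intro k
    have hb : ∃ b : ℤ, ∀ z : ℤ, i z ≤ k → z ≤ b := by
      obtain ⟨b, hb⟩ := exists_int_gt ((c + 1 + (k - i 0)) / α)
      refine ⟨max b 0, fun z hz => ?_⟩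
      rcases le_total z 0 with h0 | h0
      · exact h0.trans (le_max_right _ _)
      · refine le_trans ?_ (le_max_left _ _)
        have := (key 0 z h0).1
        have hz' : (i z : ℝ) ≤ k := by exact_mod_cast hz
        rw [div_lt_iff₀ hα] at hb
        have : (z:ℝ) * α < b * α := by push_cast at this; linarith
        have := lt_of_mul_lt_mul_right this hα.le
        exact_mod_cast this.le
    have hne : ∃ z : ℤ, i z ≤ k := by
      obtain ⟨b, hb⟩ := exists_int_gt ((c + 1 + (i 0 - k)) / α)
      refine ⟨-(max b 0), ?_⟩
      have := (key (-(max b 0)) 0 (by simp)).1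
      rw [div_lt_iff₀ hα] at hb
      have hm : (b:ℝ) ≤ ((max b 0 : ℤ) : ℝ) := by exact_mod_cast le_max_left b 0
      have hm2 := mul_le_mul_of_nonneg_right hm hα.le
      rw [Int.cast_neg] at this
      have : (i (-(max b 0)) : ℝ) ≤ k := by
        rw [Int.cast_zero] at this
        linarith
      exact_mod_cast this
    obtain ⟨m, hm1, hm2⟩ := Int.exists_greatest_of_bdd hb hne
    refine ⟨m, hm1, ?_⟩
    have h3 : k < i (m + 1) := by
      by_contra hcon
      have := hm2 (m + 1) (not_lt.1 hcon)
      omega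
    have h4 : (k:ℝ) < i (m + 1) := by exact_mod_cast h3
    have := (key m (m + 1) (by omega)).2
    push_cast at this
    linarith

lemma transfer_low {ρ w W : ℝ → ℝ} {α β α' β' α'' β'' : ℝ} (hρ : PW ρ α β) (hα : 0 < α) (hβ : 0 < β)
    (hw : PW w α' β') (hW : PW W α'' β'') {r : ℝ≥0∞} (hr : 0 < r) {C₀ : ℝ≥0∞} (hC₀ : C₀ ≠ ∞) :
    ∃ C : ℝ≥0∞, C ≠ ∞ ∧ ∀ K H, KL K → KL H →
      (∀ t, 0 < t → ENNReal.ofReal (W t) * K t ≤ C₀ * (ENNReal.ofReal (w (ρ t)) * H (ρ t))) →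
      HN r (Ioi 0) (fun u => ENNReal.ofReal (W u) * K u) ≤
        C * HN r (Ioi 0) (fun u => ENNReal.ofReal (w u) * H u) := by
  obtain ⟨i, N, hN, hi, hij, -⟩ := imap hρ hα hβ
  obtain ⟨D, hD, hDw⟩ := compare hw one_le_two
  obtain ⟨D', hD', hDW⟩ := compare hW one_le_two
  obtain ⟨C1, hC1, hdw⟩ := disc hr (ENNReal.ofReal_ne_top (r := D))
  obtain ⟨C2, hC2, hdW⟩ := disc hr (ENNReal.ofReal_ne_top (r := D'))
  set A := C₀ * ENNReal.ofReal D with hA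
  have hAt : A ≠ ∞ := ENNReal.mul_ne_top hC₀ ENNReal.ofReal_ne_top
  set S := ∑' k : ℤ, ENNReal.ofReal ((2:ℝ) ^ (-(α * |(k:ℝ)|))) with hS
  have hSt : S ≠ ∞ := geom_sum hα
  obtain ⟨C3, hC3, hs⟩ := schur2 hr (D := A) (T := A ^ r.toReal * ENNReal.ofReal (2 ^ N) * S) hAt
    (ENNReal.mul_ne_top (ENNReal.mul_ne_top (ENNReal.rpow_ne_top_of_nonneg (by positivity) hAt)
      ENNReal.ofReal_ne_top) hSt)
    (fun j k => if i j = k then A else 0) (fun j k => by split_ifs <;> simp)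
    (by
      intro hrt k
      have hr' : 0 < r.toReal := ENNReal.toReal_pos hr.ne' hrt
      by_cases hk : ∃ j₀, i j₀ = k
      · obtain ⟨j₀, hj₀⟩ := hk
        rw [hS, ← geom_sum_shift α j₀, ← ENNReal.tsum_mul_left]
        refine ENNReal.tsum_le_tsum fun j => ?_
        split_ifs with hjk
        · rw [mul_assoc]
          refine le_mul_of_one_le_right zero_le ?_
          rw [← ENNReal.ofReal_mul (by positivity), ← Real.rpow_add (by norm_num), ENNReal.one_le_ofReal]
          apply Real.one_le_rpow one_le_two
          have := (hij j j₀).1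
          rw [hjk, hj₀] at this
          simp at this
          linarith
        · simp [hr']
      · push Not at hk
        simp [hk, hr'])
  refine ⟨C2 * (C3 * C1), ENNReal.mul_ne_top hC2 (ENNReal.mul_ne_top hC3 hC1), fun K H hK hH h => ?_⟩
  have e1 := (hdW _ (fun u v hu huv hv => hDW K hK u v hu huv hv)).1
  have e2 := (hdw _ (fun u v hu huv hv => hDw H hH u v hu huv hv)).2
  have e3 := hs (fun k => ENNReal.ofReal (w (2 ^ k)) * H (2 ^ k))
    (fun k => ENNReal.ofReal (W (2 ^ k)) * K (2 ^ k)) (fun j => by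
      refine le_trans ?_ (le_iSup _ (i j))
      simp only [if_true]
      refine (h _ (by positivity)).trans ?_
      rw [hA, mul_assoc]
      exact mul_le_mul' le_rfl (hDw H hH _ _ (by positivity) (hi j).1 (hi j).2).2)
  calc _ ≤ _ := e1
    _ ≤ _ := mul_le_mul' le_rfl e3
    _ ≤ _ := mul_le_mul' le_rfl (mul_le_mul' le_rfl e2)
    _ = _ := by ring

lemma transfer_up {ρ w W : ℝ → ℝ} {α β α' β' α'' β'' ε C₀ : ℝ} (hρ : PW ρ α β) (hα : 0 < α) (hβ : 0 < β)
    (hw : PW w α' β') (hW : PW W α'' β'') {r : ℝ≥0∞} (hr : 0 < r) (hε : 0 < ε) (hC₀ : 0 < C₀) :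
    ∃ C : ℝ≥0∞, C ≠ ∞ ∧ ∀ K H, KL K → KL H →
      (∀ (m : ℤ) (M : ℝ), 0 < M → (∀ j : ℤ, ENNReal.ofReal (2 ^ (-(ε * |(j:ℝ) - m|))) *
          (ENNReal.ofReal (W (2 ^ j)) * K (2 ^ j)) ≤ ENNReal.ofReal M) →
        ENNReal.ofReal (w (ρ (2 ^ m))) * H (ρ (2 ^ m)) ≤ ENNReal.ofReal (C₀ * M)) →
      HN r (Ioi 0) (fun u => ENNReal.ofReal (w u) * H u) ≤
        C * HN r (Ioi 0) (fun u => ENNReal.ofReal (W u) * K u) := by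
  obtain ⟨i, N, hN, hi, hij, hm⟩ := imap hρ hα hβ
  choose m hm1 hm2 using hm
  obtain ⟨D, hD, hDw⟩ := compare hw one_le_two
  obtain ⟨D₂, hD₂, hDw₂⟩ := compare hw (Real.one_le_rpow one_le_two hN)
  obtain ⟨D', hD', hDW⟩ := compare hW one_le_two
  obtain ⟨C1, hC1, hdw⟩ := disc hr (ENNReal.ofReal_ne_top (r := D))
  obtain ⟨C2, hC2, hdW⟩ := disc hr (ENNReal.ofReal_ne_top (r := D'))
  set δ := ε / β with hδ
  have hδ0 : 0 < δ := by positivity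
  set A := ENNReal.ofReal (D₂ * D * C₀) with hA
  set A' := A * ENNReal.ofReal (2 ^ (δ * (2 * N))) with hA'
  have hAt : A' ≠ ∞ := ENNReal.mul_ne_top ENNReal.ofReal_ne_top ENNReal.ofReal_ne_top
  have hκ : ∀ k j : ℤ, A * ENNReal.ofReal ((2:ℝ) ^ (-(ε * |(j:ℝ) - m k|))) ≤
      A' * ENNReal.ofReal ((2:ℝ) ^ (-(δ * |(k:ℝ) - i j|))) := by
    intro k j
    rw [hA', mul_assoc, ← ENNReal.ofReal_mul (p := (2:ℝ) ^ (δ * (2 * N))) (by positivity),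
      ← Real.rpow_add (by norm_num)]
    clear_value A
    gcongr
    · norm_num
    have h1 := (hij j (m k)).2
    have h2 : |(k:ℝ) - i j| ≤ N + |(i j : ℝ) - i (m k)| := by
      have h3 : (i (m k) : ℝ) ≤ k := by exact_mod_cast hm1 k
      have h4 := hm2 k
      calc |(k:ℝ) - i j| = |(k - i (m k)) + ((i (m k) : ℝ) - i j)| := by congr 1; ring
        _ ≤ |(k - i (m k) : ℝ)| + |(i (m k) : ℝ) - i j| := abs_add_le _ _
        _ ≤ _ := by
          rw [abs_of_nonneg (by linarith), abs_sub_comm]; linarith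
    have h5 : |(k:ℝ) - i j| ≤ 2 * N + β * |(j:ℝ) - m k| := by linarith
    have h6 := mul_le_mul_of_nonneg_left h5 hδ0.le
    have h7 : δ * (2 * N + β * |(j:ℝ) - m k|) = δ * (2 * N) + ε * |(j:ℝ) - m k| := by
      rw [hδ]; field_simp
    linarith
  set S := ∑' k : ℤ, ENNReal.ofReal ((2:ℝ) ^ (-(δ * r.toReal * |(k:ℝ)|))) with hS
  by_cases hrt : r ≠ ∞ → S ≠ ∞
  swap
  · exact absurd (fun h => geom_sum (mul_pos hδ0 (ENNReal.toReal_pos hr.ne' h))) hrt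
  obtain ⟨C3, hC3, hs⟩ := schur2 hr (D := A') (T := if r = ∞ then 0 else A' ^ r.toReal * S) hAt
    (by
      split_ifs with h
      · simp
      · exact ENNReal.mul_ne_top (ENNReal.rpow_ne_top_of_nonneg (by positivity) hAt) (hrt h))
    (fun k j => A * ENNReal.ofReal ((2:ℝ) ^ (-(ε * |(j:ℝ) - m k|))))
    (fun k j => by
      refine (hκ k j).trans (mul_le_of_le_one_right zero_le ?_)
      rw [ENNReal.ofReal_le_one]
      apply Real.rpow_le_one_of_one_le_of_nonpos one_le_two
      have : 0 ≤ δ * |(k:ℝ) - i j| := by positivity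
      linarith)
    (by
      intro h j
      rw [if_neg h, hS, ← geom_sum_shift _ (i j), ← ENNReal.tsum_mul_left]
      refine ENNReal.tsum_le_tsum fun k => ?_
      refine (ENNReal.rpow_le_rpow (hκ k j) (by positivity)).trans ?_
      rw [ENNReal.mul_rpow_of_nonneg _ _ (by positivity),
        ENNReal.ofReal_rpow_of_nonneg (by positivity) (by positivity), ← Real.rpow_mul (by norm_num)]
      apply le_of_eq
      congr 4
      ring)
  refine ⟨C1 * (C3 * C2), ENNReal.mul_ne_top hC1 (ENNReal.mul_ne_top hC3 hC2), fun K H hK hH h => ?_⟩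
  have e1 := (hdW _ (fun u v hu huv hv => hDW K hK u v hu huv hv)).2
  have e2 := (hdw _ (fun u v hu huv hv => hDw H hH u v hu huv hv)).1
  have e3 := hs (fun k => ENNReal.ofReal (W (2 ^ k)) * K (2 ^ k))
    (fun k => ENNReal.ofReal (w (2 ^ k)) * H (2 ^ k)) (fun k => by
      simp only [mul_assoc A]
      rw [← ENNReal.mul_iSup]
      set G := ⨆ j : ℤ, ENNReal.ofReal ((2:ℝ) ^ (-(ε * |(j:ℝ) - m k|))) *
        (ENNReal.ofReal (W (2 ^ j)) * K (2 ^ j)) with hG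
      have g1 : ENNReal.ofReal (w (ρ (2 ^ m k))) * H (ρ (2 ^ m k)) ≤ ENNReal.ofReal C₀ * G := by
        by_cases hGt : G = ∞
        · rw [hGt, ENNReal.mul_top (by simpa using hC₀)]; exact le_top
        refine ENNReal.le_of_forall_pos_le_add fun x hx _ => ?_
        have hM : 0 < G.toReal + x / C₀ := by
          have : 0 < (x:ℝ) := by exact_mod_cast hx
          positivity
        refine (h (m k) _ hM fun j => ?_).trans ?_
        · calc _ ≤ G := le_iSup (fun j : ℤ => ENNReal.ofReal ((2:ℝ) ^ (-(ε * |(j:ℝ) - m k|))) *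
                (ENNReal.ofReal (W (2 ^ j)) * K (2 ^ j))) j
            _ = ENNReal.ofReal G.toReal := (ENNReal.ofReal_toReal hGt).symm
            _ ≤ _ := by
              apply ENNReal.ofReal_le_ofReal
              have : 0 ≤ (x:ℝ) / C₀ := by positivity
              linarith
        · rw [mul_add, mul_div_cancel₀ _ hC₀.ne', ENNReal.ofReal_add (by positivity) (by positivity),
            ENNReal.ofReal_mul hC₀.le, ENNReal.ofReal_toReal hGt]
          simp
      have g2 := (hDw H hH _ _ (by positivity) (hi (m k)).1 (hi (m k)).2).1
      have g3 := (hDw₂ H hH ((2:ℝ) ^ (i (m k))) (2 ^ k) (by positivity)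
        (zpow_le_zpow_right₀ one_le_two (hm1 k)) (by
          rw [← Real.rpow_intCast, ← Real.rpow_intCast, ← Real.rpow_add (by norm_num)]
          apply Real.rpow_le_rpow_of_exponent_le one_le_two
          linarith [hm2 k])).2
      calc _ ≤ _ := g3
        _ ≤ _ := mul_le_mul' le_rfl g2
        _ ≤ _ := mul_le_mul' le_rfl (mul_le_mul' le_rfl g1)
        _ = _ := by
          rw [hA, ENNReal.ofReal_mul (by positivity), ENNReal.ofReal_mul (by positivity)]; ring)
  calc _ ≤ _ := e2
    _ ≤ _ := mul_le_mul' le_rfl e3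
    _ ≤ _ := mul_le_mul' le_rfl (mul_le_mul' le_rfl e1)
    _ = _ := by ring

lemma k_bound {W : ℝ → ℝ} {η ε : ℝ} (hW : PW W (-η - ε) (-η + ε)) (hε : 0 < ε) :
    ∃ C : ℝ, 0 < C ∧ ∀ K, KL K → ∀ (m : ℤ) (M : ℝ), 0 < M →
      (∀ j : ℤ, ENNReal.ofReal (2 ^ (-(ε * |(j:ℝ) - m|))) *
          (ENNReal.ofReal (W (2 ^ j)) * K (2 ^ j)) ≤ ENNReal.ofReal M) →
      (∀ u, 0 < u → u ≤ 2 ^ m → K u ≤ ENNReal.ofReal (C * M / W (2 ^ m)) *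
        ENNReal.ofReal ((u / 2 ^ m) ^ (η - 2 * ε))) ∧
      (∀ u, 2 ^ m ≤ u → K u ≤ ENNReal.ofReal (C * M / W (2 ^ m)) *
        ENNReal.ofReal ((u / 2 ^ m) ^ (η + 2 * ε))) := by
  obtain ⟨D, hD, hDW⟩ := compare hW one_le_two
  obtain ⟨hp, C, hC, h⟩ := hW
  refine ⟨C * D * 2 ^ ε, by positivity, fun K hK m M hM hj => ?_⟩
  set t : ℝ := 2 ^ m with ht
  have ht0 : 0 < t := by positivity
  have hWt := hp t ht0
  -- general bound
  have gen : ∀ (u : ℝ) (j : ℤ), (2:ℝ) ^ j ≤ u → u ≤ 2 * 2 ^ j →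
      K u ≤ ENNReal.ofReal (D * 2 ^ (ε * |(j:ℝ) - m|) * M / W u) := by
    intro u j h1 h2
    have hu : 0 < u := lt_of_lt_of_le (by positivity) h1
    have hWu := hp u hu
    have c1 := (hDW K hK _ _ (by positivity) h1 h2).2
    have c2 : ENNReal.ofReal (W (2 ^ j)) * K (2 ^ j) ≤ ENNReal.ofReal (2 ^ (ε * |(j:ℝ) - m|)) * ENNReal.ofReal M := by
      calc _ = ENNReal.ofReal (2 ^ (ε * |(j:ℝ) - m|)) * (ENNReal.ofReal (2 ^ (-(ε * |(j:ℝ) - m|))) *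
          (ENNReal.ofReal (W (2 ^ j)) * K (2 ^ j))) := by
            rw [← mul_assoc, ← ENNReal.ofReal_mul (by positivity), ← Real.rpow_add (by norm_num)]
            simp
        _ ≤ _ := by gcongr; exact hj j
    have c3 : ENNReal.ofReal (W u) * K u ≤ ENNReal.ofReal (D * 2 ^ (ε * |(j:ℝ) - m|) * M) := by
      refine c1.trans ((mul_le_mul' le_rfl c2).trans (le_of_eq ?_))
      rw [← ENNReal.ofReal_mul (by positivity), ← ENNReal.ofReal_mul (by positivity)]
      congr 1; ring
    rw [ENNReal.ofReal_div_of_pos hWu, ENNReal.le_div_iff_mul_le (by simp [hWu]) (by simp), mul_comm]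
    exact c3
  constructor
  · intro u hu hut
    obtain ⟨j, j1, j2⟩ := exists_mem_Ico_zpow hu one_lt_two
    rw [zpow_add_one₀ (by norm_num)] at j2
    have hjm : j ≤ m := (zpow_le_zpow_iff_right₀ (by norm_num : (1:ℝ) < 2)).1 (j1.trans hut)
    have hjm' : (j:ℝ) ≤ m := by exact_mod_cast hjm
    refine (gen u j j1 (by linarith)).trans ?_
    have hWu := hp u hu
    rw [← ENNReal.ofReal_mul (by positivity)]
    apply ENNReal.ofReal_le_ofReal
    have b1 : (2:ℝ) ^ (ε * |(j:ℝ) - m|) ≤ 2 ^ ε * (t / u) ^ ε := by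
      rw [← Real.mul_rpow (by norm_num) (by positivity), mul_comm ε, Real.rpow_mul (by norm_num)]
      apply Real.rpow_le_rpow (by positivity) _ hε.le
      rw [abs_sub_comm, abs_of_nonneg (by linarith), Real.rpow_sub (by norm_num), Real.rpow_intCast,
        Real.rpow_intCast, ← ht, ← mul_div_assoc, div_le_div_iff₀ (by positivity) hu]
      nlinarith
    have b2 := (h u t hu hut).1
    have b3 : 1 / W u ≤ C * (t / u) ^ (-η + ε) / W t := by
      rw [div_le_div_iff₀ hWu hWt]; linarith
    have b4 : (u / t) ^ (η - 2 * ε) = (t / u) ^ ε * (t / u) ^ (-η + ε) := by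
      rw [← Real.rpow_add (by positivity), ← inv_div t u, Real.inv_rpow (by positivity),
        ← Real.rpow_neg (by positivity)]
      congr 1; ring
    rw [b4]
    calc _ = D * 2 ^ (ε * |(j:ℝ) - m|) * M * (1 / W u) := by ring
      _ ≤ D * (2 ^ ε * (t / u) ^ ε) * M * (C * (t / u) ^ (-η + ε) / W t) := by gcongr
      _ = _ := by ring
  · intro u hut
    have hu : 0 < u := by linarith
    obtain ⟨j, j1, j2⟩ := exists_mem_Ico_zpow hu one_lt_two
    have hjm : m < j + 1 := (zpow_lt_zpow_iff_right₀ (by norm_num : (1:ℝ) < 2)).1 (hut.trans_lt j2)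
    rw [zpow_add_one₀ (by norm_num)] at j2
    have hjm' : (m:ℝ) ≤ j := by exact_mod_cast (by omega : m ≤ j)
    refine (gen u j j1 (by linarith)).trans ?_
    have hWu := hp u hu
    rw [← ENNReal.ofReal_mul (by positivity)]
    apply ENNReal.ofReal_le_ofReal
    have b1 : (2:ℝ) ^ (ε * |(j:ℝ) - m|) ≤ 2 ^ ε * (u / t) ^ ε := by
      rw [← Real.mul_rpow (by norm_num) (by positivity), mul_comm ε, Real.rpow_mul (by norm_num)]
      apply Real.rpow_le_rpow (by positivity) _ hε.le
      rw [abs_of_nonneg (by linarith), Real.rpow_sub (by norm_num), Real.rpow_intCast,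
        Real.rpow_intCast, ← ht, ← mul_div_assoc, div_le_div_iff_of_pos_right ht0]
      linarith
    have b2 := (h t u ht0 hut).2
    have b3 : 1 / W u ≤ C * (u / t) ^ (η + ε) / W t := by
      rw [div_le_div_iff₀ hWu hWt]
      have : (u / t) ^ (η + ε) * (u / t) ^ (-η - ε) = 1 := by
        rw [← Real.rpow_add (by positivity)]
        simp [show η + ε + (-η - ε) = 0 by ring]
      calc 1 * W t = (u / t) ^ (η + ε) * ((u / t) ^ (-η - ε) * W t) := by
            rw [← mul_assoc, this]
        _ ≤ (u / t) ^ (η + ε) * (C * W u) := by gcongr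
        _ = _ := by ring
    have b4 : (u / t) ^ (η + 2 * ε) = (u / t) ^ ε * (u / t) ^ (η + ε) := by
      rw [← Real.rpow_add (by positivity)]
      congr 1; ring
    rw [b4]
    calc _ = D * 2 ^ (ε * |(j:ℝ) - m|) * M * (1 / W u) := by ring
      _ ≤ D * (2 ^ ε * (u / t) ^ ε) * M * (C * (u / t) ^ (η + ε) / W t) := by gcongr
      _ = _ := by ring


lemma svWgt_HN (r : ℝ≥0∞) {S : Set ℝ} (hS : MeasurableSet S) (hS0 : S ⊆ Ioi 0) (b : ℝ → ℝ) :
    LqNorm r S (svWgt r b) = HN r S (fun u => ENNReal.ofReal (b u)) := by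
  unfold HN
  refine LqNorm_congr hS fun u hu => ?_
  have : 0 < u := hS0 hu
  rw [svWgt, ENNReal.ofReal_mul (by positivity)]

lemma wgt_split {u : ℝ} (hu : 0 < u) (θ ρ c : ℝ) (K : ℝ≥0∞) :
    ENNReal.ofReal (u ^ (-θ - ρ) * c) * K =
      ENNReal.ofReal (u ^ (-ρ)) * (ENNReal.ofReal (u ^ (-θ) * c) * K) := by
  rw [← mul_assoc, ← ENNReal.ofReal_mul (by positivity), ← mul_assoc, ← Real.rpow_add hu]
  congr 4
  ring

lemma normK_HN (N₀ N₁ : E → ℝ≥0∞) (θ : ℝ) (q : ℝ≥0∞) (b : ℝ → ℝ) (f : E) :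
    normK N₀ N₁ θ q b f =
      HN q (Ioi 0) (fun u => ENNReal.ofReal (u ^ (-θ) * b u) * Kf N₀ N₁ u f) := by
  unfold normK HN
  exact LqNorm_congr measurableSet_Ioi fun u hu => wgt_split hu _ _ _ _

lemma normK_X0 (N₀ N₁ : E → ℝ≥0∞) (q : ℝ≥0∞) (b : ℝ → ℝ) :
    normK N₀ N₁ 0 q b = X0 N₀ N₁ q b := by
  funext f
  rw [normK_HN, X0]
  simp

lemma normR_X1 (N₀ N₁ : E → ℝ≥0∞) (σ : ℝ) (r q : ℝ≥0∞) (b a : ℝ → ℝ) :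
    normR N₀ N₁ σ r q b a = X1 N₀ N₁ σ r q (fun t => b t / a t) a := by
  funext f
  unfold normR X1
  nth_rw 1 [HN]
  refine LqNorm_congr measurableSet_Ioi fun t ht => ?_
  have ht' : (0:ℝ) < t := ht
  rw [ENNReal.ofReal_mul (by positivity), mul_assoc]
  congr 2
  unfold HN
  exact LqNorm_congr measurableSet_Ioi fun u hu => wgt_split (ht'.trans hu) _ _ _ _


theorem theorem20
    (A₀ A₁ : QuasiBanach E)
    (hne : ∃ x : E, x ≠ 0 ∧ A₀.N x ≠ ∞ ∧ A₁.N x ≠ ∞)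
    (θ θ₁ : ℝ) (hθ : 0 < θ) (hθ' : θ < 1) (hθ₁ : 0 < θ₁) (hθ₁' : θ₁ < 1)
    (q₁ r₀ r₁ r : ℝ≥0∞) (hq₁ : 0 < q₁) (hr₀ : 0 < r₀) (hr₁ : 0 < r₁) (hr : 0 < r)
    (a a₁ b₀ b₁ : ℝ → ℝ)
    (h_sv_a : SlowlyVarying a)
    (h_sv_a₁ : SlowlyVarying a₁)
    (h_sv_b₀ : SlowlyVarying b₀)
    (h_sv_b₁ : SlowlyVarying b₁)
    (hfin₁ : LqNorm r₁ (Ioo 0 1) (svWgt r₁ (fun s => b₁ s / a₁ s)) ≠ ∞)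
    (hfin₀ : LqNorm r₀ (Ioi 1) (svWgt r₀ (fun s => b₀ s)) ≠ ∞)
    (c₀ c₁ ρ : ℝ → ℝ)
    (hc₀ : ∀ t, c₀ t = (LqNorm r₀ (Ioi t) (svWgt r₀ (fun s => b₀ s))).toReal)
    (hc₁ : ∀ t, c₁ t = a₁ t * (LqNorm r₁ (Ioo 0 t) (svWgt r₁ (fun s => b₁ s / a₁ s))).toReal)
    (hρ : ∀ t, ρ t = t ^ θ₁ * (c₀ t / c₁ t)) :
    EquivNorms
      (normK (normK A₀.N A₁.N 0 r₀ b₀) (normR A₀.N A₁.N θ₁ r₁ q₁ b₁ a₁) θ r a)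
      (normK A₀.N A₁.N (θ * θ₁) r (fun t => c₀ t ^ (1 - θ) * c₁ t ^ θ * a (ρ t))) := by
  have sva := h_sv_a.svp
  have sva₁ := h_sv_a₁.svp
  have svb₀ := h_sv_b₀.svp
  have svβ : SVp (fun t => b₁ t / a₁ t) := h_sv_b₁.svp.div sva₁
  rw [svWgt_HN _ measurableSet_Ioo (fun x hx => hx.1)] at hfin₁
  rw [svWgt_HN _ measurableSet_Ioi (Ioi_subset_Ioi zero_le_one)] at hfin₀
  obtain ⟨fin₀, svc₀, L₀, hL₀, hbL₀⟩ := SVp_tail svb₀ hr₀ hfin₀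
  obtain ⟨fin₁, svd, L₁, hL₁, hbL₁⟩ := SVp_head svβ hr₁ hfin₁
  have hc₀' : ∀ t, 0 < t → c₀ t = (HN r₀ (Ioi t) (fun u => ENNReal.ofReal (b₀ u))).toReal := by
    intro t ht
    rw [hc₀, svWgt_HN _ measurableSet_Ioi (Ioi_subset_Ioi ht.le)]
  have hc₁' : ∀ t, 0 < t →
      c₁ t = a₁ t * (HN r₁ (Ioo 0 t) (fun u => ENNReal.ofReal (b₁ u / a₁ u))).toReal := by
    intro t ht
    rw [hc₁, svWgt_HN _ measurableSet_Ioo (fun x hx => hx.1)]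
  have sc₀ : SVp c₀ := svc₀.congr hc₀'
  have sc₁ : SVp c₁ := (sva₁.mul svd).congr hc₁'
  have e₀ : ∀ t, 0 < t → HN r₀ (Ioi t) (fun u => ENNReal.ofReal (b₀ u)) = ENNReal.ofReal (c₀ t) := by
    intro t ht
    rw [hc₀' t ht, ENNReal.ofReal_toReal (fin₀ t ht)]
  have e₁ : ∀ t, 0 < t → HN r₁ (Ioo 0 t) (fun u => ENNReal.ofReal (b₁ u / a₁ u)) *
      ENNReal.ofReal (a₁ t) = ENNReal.ofReal (c₁ t) := by
    intro t ht
    rw [hc₁' t ht, ENNReal.ofReal_mul (sva₁.pos ht).le, ENNReal.ofReal_toReal (fin₁ t ht), mul_comm]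
  have hρ' : ∀ t, 0 < t → ENNReal.ofReal (ρ t) *
      (HN r₁ (Ioo 0 t) (fun u => ENNReal.ofReal ((fun t => b₁ t / a₁ t) u)) * ENNReal.ofReal (a₁ t)) =
      ENNReal.ofReal (t ^ θ₁) * HN r₀ (Ioi t) (fun u => ENNReal.ofReal (b₀ u)) := by
    intro t ht
    have h0 := sc₀.pos ht
    have h1 := sc₁.pos ht
    have := e₁ t ht
    dsimp only
    rw [e₁ t ht, e₀ t ht, hρ, ← ENNReal.ofReal_mul (by positivity), ← ENNReal.ofReal_mul (by positivity)]
    congr 1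
    field_simp
  have pρ : PW ρ (θ₁ / 2) (θ₁ + 1) :=
    ((sc₀.div sc₁).pw θ₁ (by linarith) (by linarith)).congr (fun t _ => hρ t)
  have saρ : SVp (fun t => a (ρ t)) := sva.comp pρ (by positivity) (by positivity)
  set as : ℝ → ℝ := fun t => c₀ t ^ (1 - θ) * c₁ t ^ θ * a (ρ t) with has
  have sas : SVp as := ((sc₀.rpow (by linarith)).mul (sc₁.rpow hθ)).mul saρ
  set η := θ * θ₁ with hη
  have hη0 : 0 < η := by positivity
  have hηθ : η < θ₁ := by rw [hη]; nlinarith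
  set W : ℝ → ℝ := fun u => u ^ (-η) * as u with hWdef
  set w : ℝ → ℝ := fun u => u ^ (-θ) * a u with hwdef
  have hwW : ∀ t, 0 < t → w (ρ t) * c₀ t = W t := by
    intro t ht
    have h0 := sc₀.pos ht
    have h1 := sc₁.pos ht
    have key : ρ t ^ (-θ) * c₀ t = t ^ (-η) * (c₀ t ^ (1 - θ) * c₁ t ^ θ) := by
      rw [hρ, Real.mul_rpow (by positivity) (by positivity), ← Real.rpow_mul ht.le,
        Real.div_rpow h0.le h1.le, Real.rpow_neg h1.le, Real.rpow_sub h0, Real.rpow_neg h0.le,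
        Real.rpow_one]
      rw [show θ₁ * -θ = -η by rw [hη]; ring]
      have : 0 < c₁ t ^ θ := by positivity
      have : 0 < c₀ t ^ θ := by positivity
      field_simp
    simp only [hwdef, hWdef, has]
    calc _ = (ρ t ^ (-θ) * c₀ t) * a (ρ t) := by ring
      _ = _ := by rw [key]; ring
  obtain ⟨ε, hε, hε1, hε2⟩ : ∃ ε : ℝ, 0 < ε ∧ 2 * ε < η ∧ η + 2 * ε < θ₁ := by
    refine ⟨min η (θ₁ - η) / 4, ?_, ?_, ?_⟩
    · have : 0 < min η (θ₁ - η) := lt_min hη0 (by linarith)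
      positivity
    · linarith [min_le_left η (θ₁ - η)]
    · linarith [min_le_right η (θ₁ - η)]
  have pW : PW W (-η - ε) (-η + ε) := sas.pw (-η) (by linarith) (by linarith)
  have pw : PW w (-θ - 1) (-θ + 1) := sva.pw (-θ) (by linarith) (by linarith)
  obtain ⟨Cl, hCl, hlow⟩ := point_low (b₀ := b₀) A₀ A₁ hr₀ hr₁ hq₁ sva₁ hρ'
  obtain ⟨Cu, hCu, hup⟩ := point_up A₀ A₁ (p := η - 2 * ε) (P := η + 2 * ε) (by linarith) (by linarith)
    (by linarith) hε2 hθ₁' hr₀ hr₁ hq₁ svb₀ svβ sva₁ hρ' hL₀ hL₁ hbL₀ hbL₁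
  obtain ⟨Ck, hCk, hkb⟩ := k_bound pW hε
  obtain ⟨D₁, hD₁, ht1⟩ := transfer_low pρ (by positivity) (by positivity) pw pW hr hCl
  obtain ⟨D₂, hD₂, ht2⟩ := transfer_up (ε := ε) (C₀ := (Cu.toReal + 1) * Ck) pρ (by positivity)
    (by positivity) pw pW hr hε (by positivity)
  rw [normK_X0, normR_X1]
  have low : ∀ f : E, normK A₀.N A₁.N η r as f ≤ D₁ *
      normK (X0 A₀.N A₁.N r₀ b₀) (X1 A₀.N A₁.N θ₁ r₁ q₁ (fun t => b₁ t / a₁ t) a₁) θ r a f := by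
    intro f
    rw [normK_HN, normK_HN]
    refine ht1 _ _ (Kf_KL _ _ f) (Kf_KL _ _ f) fun t ht => ?_
    have h1 := hlow f t ht
    rw [e₀ t ht] at h1
    have hpos := pw.pos (pρ.pos ht)
    rw [← hwW t ht, ENNReal.ofReal_mul hpos.le, mul_assoc]
    refine (mul_le_mul' le_rfl h1).trans (le_of_eq ?_)
    ring
  have up : ∀ f : E, normK (X0 A₀.N A₁.N r₀ b₀) (X1 A₀.N A₁.N θ₁ r₁ q₁ (fun t => b₁ t / a₁ t) a₁) θ r a f
      ≤ D₂ * normK A₀.N A₁.N η r as f := by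
    intro f
    rw [normK_HN, normK_HN]
    refine ht2 _ _ (Kf_KL _ _ f) (Kf_KL _ _ f) fun m M hM hj => ?_
    obtain ⟨k1, k2⟩ := hkb _ (Kf_KL _ _ f) m M hM hj
    have ht : (0:ℝ) < 2 ^ m := by positivity
    have hWt := pW.pos ht
    have h0 := sc₀.pos ht
    have hpos := pw.pos (pρ.pos ht)
    have hB : 0 < Ck * M / W (2 ^ m) := by positivity
    have h1 := hup f _ (ENNReal.ofReal (Ck * M / W (2 ^ m))) ht (by simpa using hB)
      ENNReal.ofReal_ne_top k1 k2
    rw [e₀ _ ht] at h1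
    refine (mul_le_mul' le_rfl h1).trans ?_
    calc _ = Cu * (ENNReal.ofReal (w (ρ (2 ^ m))) * ENNReal.ofReal (c₀ (2 ^ m)) *
          ENNReal.ofReal (Ck * M / W (2 ^ m))) := by ring
      _ = ENNReal.ofReal Cu.toReal * ENNReal.ofReal (Ck * M) := by
          rw [← ENNReal.ofReal_mul hpos.le, hwW _ ht, ← ENNReal.ofReal_mul hWt.le,
            mul_div_cancel₀ _ hWt.ne', ENNReal.ofReal_toReal hCu]
      _ ≤ _ := by
          rw [← ENNReal.ofReal_mul (by positivity)]
          apply ENNReal.ofReal_le_ofReal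
          have : 0 < Ck * M := by positivity
          nlinarith
  refine ⟨D₁ + D₂ + 1, by positivity, by simp [hD₁, hD₂], fun f => ⟨?_, ?_⟩⟩
  · rw [ENNReal.inv_mul_le_iff (by positivity) (by simp [hD₁, hD₂])]
    refine (low f).trans (mul_le_mul' ?_ le_rfl)
    rw [add_assoc]; exact le_self_add
  · refine (up f).trans (mul_le_mul' ?_ le_rfl)
    rw [add_comm D₁, add_assoc]; exact le_self_add

end
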